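/- arXiv:2403.02851 — 2 statements merged into one kernel-verified Lean document; each statement's English description precedes it below -/
import Mathlib

section
/- Let α ∈ ℍ be nonzero and set φ = arccos(Re α/|α|), so that |α|² cos 2φ = 2(Re α)² − |α|². Then the quaternionic Mahler measure of q ↦ q² − 2(Re α)q + |α|² equals (1/2)|α|² cos 2φ if |α| ≤ 1, and equals (1/2)|α|^{−2} cos 2φ + 2 log|α| if |α| > 1. -/
open MeasureTheory Quaternion

noncomputable instance : MeasurableSpace (Quaternion ℝ) := borel _
instance : BorelSpace (Quaternion ℝ) := ⟨rfl⟩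
instance : Nonempty (Metric.sphere (0 : Quaternion ℝ) 1) := ⟨⟨1, by simp⟩⟩

/-- The probability Haar measure `μ` on the group `T¹(ℍ)` of unit quaternions
(the Haar measure normalized so that the whole group has measure `1`). -/
noncomputable def muH : Measure (Metric.sphere (0 : Quaternion ℝ) 1) :=
  Measure.haarMeasure ⊤

/-- The quaternionic Mahler measure `m_ℍ(f) = ∫_{T¹(ℍ)} log |f(q)| dμ(q)`. -/
noncomputable def mahlerH (f : Quaternion ℝ → Quaternion ℝ) : ℝ :=
  ∫ q : Metric.sphere (0 : Quaternion ℝ) 1, Real.log ‖f q‖ ∂muH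

open Filter Topology Polynomial.Chebyshev

instance : IsProbabilityMeasure muH :=
  ⟨by simpa [muH] using Measure.haarMeasure_self (K₀ := (⊤ : TopologicalSpace.PositiveCompacts
    (Metric.sphere (0 : Quaternion ℝ) 1)))⟩

instance : muH.IsMulLeftInvariant := by unfold muH; infer_instance

/-- Differentiation under the integral sign over a compact space. -/
theorem hasDerivAt_integral_of_continuous_of_compactSpace {X : Type*} [TopologicalSpace X]
    [CompactSpace X] [MeasurableSpace X] [OpensMeasurableSpace X] (μ : Measure X)
    [IsFiniteMeasure μ] {F F' : ℝ → X → ℝ} (hF : ∀ t, Continuous (F t))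
    (hF' : Continuous (Function.uncurry F')) (h : ∀ t x, HasDerivAt (F · x) (F' t x) t) (t₀ : ℝ) :
    HasDerivAt (fun t => ∫ x, F t x ∂μ) (∫ x, F' t₀ x ∂μ) t₀ := by
  obtain ⟨C, hC⟩ := ((isCompact_closedBall t₀ 1).prod (isCompact_univ (X := X))
    ).exists_bound_of_continuousOn hF'.continuousOn
  have hF'₀ : Continuous (F' t₀) := hF'.comp (Continuous.prodMk_right t₀)
  refine (hasDerivAt_integral_of_dominated_loc_of_deriv_le (bound := fun _ => C)
    (Metric.closedBall_mem_nhds t₀ one_pos)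
    (.of_forall fun t => (hF t).aestronglyMeasurable_of_compactSpace)
    ((hF t₀).integrable_of_hasCompactSupport (.of_compactSpace _))
    hF'₀.aestronglyMeasurable_of_compactSpace
    (.of_forall fun x t ht => hC (t, x) ⟨ht, trivial⟩) (integrable_const C)
    (.of_forall fun x t _ => h t x)).2

theorem continuous_re_sphere :
    Continuous fun q : Metric.sphere (0 : Quaternion ℝ) 1 => q.1.re :=
  Quaternion.continuous_re.comp continuous_subtype_val

theorem integrable_muH_of_continuous {f : Metric.sphere (0 : Quaternion ℝ) 1 → ℝ}
    (hf : Continuous f) : Integrable f muH :=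
  hf.integrable_of_hasCompactSupport (.of_compactSpace _)

theorem sum_sq_eq_one_of_mem_sphere (q : Metric.sphere (0 : Quaternion ℝ) 1) :
    q.1.re ^ 2 + q.1.imI ^ 2 + q.1.imJ ^ 2 + q.1.imK ^ 2 = 1 := by
  have h := Quaternion.normSq_eq_norm_mul_self q.1
  rw [norm_eq_of_mem_sphere, Quaternion.normSq_def'] at h
  linarith

/-- Invariance of `muH` under a one-parameter group of left translations that rotates the plane
spanned by the real part and a further coordinate `e`, in infinitesimal form. -/
theorem integral_rotation_generator_eq_zero (g : Polynomial ℝ)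
    (e : Metric.sphere (0 : Quaternion ℝ) 1 → ℝ) (he : Continuous e)
    (u : ℝ → Metric.sphere (0 : Quaternion ℝ) 1)
    (hre : ∀ t q, (u t * q).1.re = Real.cos t * q.1.re - Real.sin t * e q)
    (hue : ∀ t q, e (u t * q) = Real.cos t * e q + Real.sin t * q.1.re) :
    ∫ q, (g.eval q.1.re * q.1.re - g.derivative.eval q.1.re * e q ^ 2) ∂muH = 0 := by
  have hr := continuous_re_sphere
  have hr₂ : Continuous fun p : ℝ × Metric.sphere (0 : Quaternion ℝ) 1 => p.2.1.re :=
    hr.comp continuous_snd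
  have hd := hasDerivAt_integral_of_continuous_of_compactSpace muH
    (F := fun t q => g.eval (Real.cos t * q.1.re - Real.sin t * e q) *
      (Real.cos t * e q + Real.sin t * q.1.re))
    (F' := fun t q => g.derivative.eval (Real.cos t * q.1.re - Real.sin t * e q) *
      (-Real.sin t * q.1.re - Real.cos t * e q) * (Real.cos t * e q + Real.sin t * q.1.re) +
      g.eval (Real.cos t * q.1.re - Real.sin t * e q) *
      (-Real.sin t * e q + Real.cos t * q.1.re))
    (fun t => by fun_prop) (by simp only [Function.uncurry_def]; fun_prop)
    (fun t q => by
      have h1 := ((Real.hasDerivAt_cos t).mul_const q.1.re).sub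
        ((Real.hasDerivAt_sin t).mul_const (e q))
      have h2 := ((Real.hasDerivAt_cos t).mul_const (e q)).add
        ((Real.hasDerivAt_sin t).mul_const q.1.re)
      exact ((g.hasDerivAt _).comp t h1).mul h2) 0
  have hc : (fun t => ∫ q, g.eval (Real.cos t * q.1.re - Real.sin t * e q) *
      (Real.cos t * e q + Real.sin t * q.1.re) ∂muH) =
      fun _ => ∫ q, g.eval q.1.re * e q ∂muH := by
    funext t
    rw [← integral_mul_left_eq_self (fun q => g.eval q.1.re * e q) (u t)]
    simp only [hre, hue]
  rw [hc] at hd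
  have h0 := hd.unique (hasDerivAt_const _ _)
  refine Eq.trans ?_ h0
  congr 1
  funext q
  simp
  ring

theorem mem_sphere_of_sum_sq_eq_one {q : Quaternion ℝ}
    (h : q.re ^ 2 + q.imI ^ 2 + q.imJ ^ 2 + q.imK ^ 2 = 1) :
    q ∈ Metric.sphere (0 : Quaternion ℝ) 1 := by
  have h1 := Quaternion.normSq_eq_norm_mul_self q
  rw [Quaternion.normSq_def', h] at h1
  rw [mem_sphere_zero_iff_norm]
  nlinarith [norm_nonneg q]

/-- The density of the real part of a random unit quaternion is proportional to
`(1 - x ^ 2) ^ (1 / 2)`; this is the corresponding integration by parts formula. -/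
theorem integral_three_mul_re_mul_sub_derivative (g : Polynomial ℝ) :
    ∫ q : Metric.sphere (0 : Quaternion ℝ) 1,
      (3 * q.1.re * g.eval q.1.re - (1 - q.1.re ^ 2) * g.derivative.eval q.1.re) ∂muH = 0 := by
  have hr := continuous_re_sphere
  have hi : Continuous fun q : Metric.sphere (0 : Quaternion ℝ) 1 => q.1.imI :=
    Quaternion.continuous_imI.comp continuous_subtype_val
  have hj : Continuous fun q : Metric.sphere (0 : Quaternion ℝ) 1 => q.1.imJ :=
    Quaternion.continuous_imJ.comp continuous_subtype_val
  have hk : Continuous fun q : Metric.sphere (0 : Quaternion ℝ) 1 => q.1.imK :=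
    Quaternion.continuous_imK.comp continuous_subtype_val
  have hI := integral_rotation_generator_eq_zero g _ hi
    (fun t => ⟨⟨Real.cos t, Real.sin t, 0, 0⟩, mem_sphere_of_sum_sq_eq_one (by simp)⟩)
    (fun t q => (Quaternion.re_mul _ _).trans (by simp))
    (fun t q => (Quaternion.imI_mul _ _).trans (by simp))
  have hJ := integral_rotation_generator_eq_zero g _ hj
    (fun t => ⟨⟨Real.cos t, 0, Real.sin t, 0⟩, mem_sphere_of_sum_sq_eq_one (by simp)⟩)
    (fun t q => (Quaternion.re_mul _ _).trans (by simp))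
    (fun t q => (Quaternion.imJ_mul _ _).trans (by simp))
  have hK := integral_rotation_generator_eq_zero g _ hk
    (fun t => ⟨⟨Real.cos t, 0, 0, Real.sin t⟩, mem_sphere_of_sum_sq_eq_one (by simp)⟩)
    (fun t q => (Quaternion.re_mul _ _).trans (by simp))
    (fun t q => (Quaternion.imK_mul _ _).trans (by simp))
  have hsum := congrArg₂ (· + ·) (congrArg₂ (· + ·) hI hJ) hK
  simp only [add_zero] at hsum
  rw [← integral_add (integrable_muH_of_continuous (by fun_prop))
      (integrable_muH_of_continuous (by fun_prop)),
    ← integral_add (integrable_muH_of_continuous (by fun_prop))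
      (integrable_muH_of_continuous (by fun_prop))] at hsum
  refine Eq.trans ?_ hsum
  congr 1
  funext q
  linear_combination (g.derivative.eval q.1.re) * sum_sq_eq_one_of_mem_sphere q

theorem integral_chebyshevU_re (n : ℕ) (hn : n ≠ 0) :
    ∫ q : Metric.sphere (0 : Quaternion ℝ) 1, (U ℝ n).eval q.1.re ∂muH = 0 := by
  have h := integral_three_mul_re_mul_sub_derivative (U ℝ n).derivative
  have hode : ∀ x : ℝ, 3 * x * (U ℝ n).derivative.eval x -
      (1 - x ^ 2) * (U ℝ n).derivative.derivative.eval x =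
      ((n + 2) * n : ℝ) * (U ℝ n).eval x := fun x => by
    have := congrArg (Polynomial.eval x)
      (one_sub_X_sq_mul_derivative_derivative_U_eq_poly_in_U (R := ℝ) n)
    simp at this
    linarith
  simp only [hode, integral_const_mul] at h
  exact (mul_eq_zero.mp h).resolve_left (by positivity)

theorem integral_chebyshevT_re (n : ℕ) (hn : n ≠ 0) :
    ∫ q : Metric.sphere (0 : Quaternion ℝ) 1, (T ℝ n).eval q.1.re ∂muH =
      if n = 2 then -1 / 2 else 0 := by
  have hr := continuous_re_sphere
  obtain rfl | ⟨m, rfl⟩ : n = 1 ∨ ∃ m, n = m + 2 := by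
    rcases n with _ | _ | m <;> simp_all
  · have h := integral_chebyshevU_re 1 one_ne_zero
    simp only [Nat.cast_one, U_one, Polynomial.eval_mul, Polynomial.eval_ofNat, Polynomial.eval_X,
      integral_const_mul] at h
    simpa using h
  · have hT : ∀ x : ℝ, (T ℝ (m + 2 : ℕ)).eval x =
        ((U ℝ (m + 2 : ℕ)).eval x - (U ℝ m).eval x) / 2 := fun x => by
      have := congrArg (Polynomial.eval x) (two_mul_T_eq_U_sub_U ℝ m)
      simp only [Polynomial.eval_mul, Polynomial.eval_ofNat, Polynomial.eval_sub] at this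
      push_cast
      linarith
    simp only [hT, integral_div]
    rw [integral_sub (integrable_muH_of_continuous (by fun_prop))
      (integrable_muH_of_continuous (by fun_prop)), integral_chebyshevU_re _ (by omega)]
    rcases eq_or_ne m 0 with rfl | hm
    · simp
    · simp [integral_chebyshevU_re m hm, hm]

/-- The value of `‖q ^ 2 - 2 * c * q + d‖ ^ 2` at a unit quaternion `q` with real part `x`. -/
def quadNormSq (c d x : ℝ) : ℝ := ((1 + d) * x - 2 * c) ^ 2 + (1 - d) ^ 2 * (1 - x ^ 2)

theorem log_norm_quadratic (c d : ℝ) (q : Metric.sphere (0 : Quaternion ℝ) 1) :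
    Real.log ‖q.1 ^ 2 - ((2 * c : ℝ) : Quaternion ℝ) * q.1 + ((d : ℝ) : Quaternion ℝ)‖ =
      Real.log (quadNormSq c d q.1.re) / 2 := by
  have hq := sum_sq_eq_one_of_mem_sphere q
  have h : ‖q.1 ^ 2 - ((2 * c : ℝ) : Quaternion ℝ) * q.1 + ((d : ℝ) : Quaternion ℝ)‖ ^ 2 =
      quadNormSq c d q.1.re := by
    rw [sq, ← Quaternion.normSq_eq_norm_mul_self, Quaternion.normSq_def', quadNormSq]
    simp only [sq q.1, Quaternion.re_add, Quaternion.re_sub, Quaternion.re_mul, Quaternion.re_coe,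
      Quaternion.imI_add, Quaternion.imI_sub, Quaternion.imI_mul, Quaternion.imI_coe,
      Quaternion.imJ_add, Quaternion.imJ_sub, Quaternion.imJ_mul, Quaternion.imJ_coe,
      Quaternion.imK_add, Quaternion.imK_sub, Quaternion.imK_mul, Quaternion.imK_coe]
    generalize q.1.re = x at *
    generalize q.1.imI = y at *
    generalize q.1.imJ = z at *
    generalize q.1.imK = w at *
    linear_combination (4 * (x - c) ^ 2 - 2 * (x ^ 2 - 2 * c * x + d) + (y ^ 2 + z ^ 2 + w ^ 2)
      + (1 - x ^ 2)) * hq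
  rw [← h, Real.log_pow]
  push_cast
  ring

theorem quadNormSq_mul_cos (r c x : ℝ) : quadNormSq (r * c) (r ^ 2) x =
    4 * r ^ 2 * (x - c) ^ 2 + (1 - r) ^ 2 * ((1 + r) ^ 2 - 4 * r * (x * c)) := by
  unfold quadNormSq
  ring

theorem mul_mem_Icc_neg_one_one {x c : ℝ} (hx : x ∈ Set.Icc (-1 : ℝ) 1)
    (hc : c ∈ Set.Icc (-1 : ℝ) 1) : x * c ∈ Set.Icc (-1 : ℝ) 1 :=
  abs_le.mp (by
    rw [abs_mul]
    exact mul_le_one₀ (abs_le.mpr hx) (abs_nonneg _) (abs_le.mpr hc))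

theorem le_quadNormSq {r c x : ℝ} (hr : 0 ≤ r) (hx : x ∈ Set.Icc (-1 : ℝ) 1)
    (hc : c ∈ Set.Icc (-1 : ℝ) 1) :
    4 * r ^ 2 * (x - c) ^ 2 ≤ quadNormSq (r * c) (r ^ 2) x := by
  rw [quadNormSq_mul_cos]
  have := (mul_mem_Icc_neg_one_one hx hc).2
  have : 0 ≤ (1 + r) ^ 2 - 4 * r * (x * c) := by nlinarith [sq_nonneg (1 - r)]
  have := mul_nonneg (sq_nonneg (1 - r)) this
  linarith

theorem quadNormSq_pos {r c x : ℝ} (hr : 0 ≤ r) (hr1 : r < 1) (hx : x ∈ Set.Icc (-1 : ℝ) 1)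
    (hc : c ∈ Set.Icc (-1 : ℝ) 1) : 0 < quadNormSq (r * c) (r ^ 2) x := by
  rw [quadNormSq_mul_cos]
  have := (mul_mem_Icc_neg_one_one hx hc).2
  have h1 : 0 < 1 - r := by linarith
  have : 0 < (1 + r) ^ 2 - 4 * r * (x * c) := by nlinarith [mul_pos h1 h1]
  positivity

theorem quadNormSq_le {r c x : ℝ} (hr : 0 ≤ r) (hr1 : r ≤ 1) (hx : x ∈ Set.Icc (-1 : ℝ) 1)
    (hc : c ∈ Set.Icc (-1 : ℝ) 1) : quadNormSq (r * c) (r ^ 2) x ≤ 32 := by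
  rw [quadNormSq_mul_cos]
  have h0 := (mul_mem_Icc_neg_one_one hx hc).1
  have h1 : (x - c) ^ 2 ≤ 4 := by nlinarith [hx.1, hx.2, hc.1, hc.2]
  have h2 : r ^ 2 ≤ 1 := by nlinarith
  have h3 : (1 - r) ^ 2 ≤ 1 := by nlinarith
  have h4 : (1 + r) ^ 2 - 4 * r * (x * c) ≤ 8 := by nlinarith
  have h5 : r ^ 2 * (x - c) ^ 2 ≤ 1 * 4 := by gcongr
  have h6 : (1 - r) ^ 2 * ((1 + r) ^ 2 - 4 * r * (x * c)) ≤ (1 - r) ^ 2 * 8 := by gcongr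
  linarith

theorem re_mem_Icc (q : Metric.sphere (0 : Quaternion ℝ) 1) : q.1.re ∈ Set.Icc (-1 : ℝ) 1 :=
  abs_le.mp ((sq_le_one_iff_abs_le_one _).mp (by
    nlinarith [sum_sq_eq_one_of_mem_sphere q, sq_nonneg q.1.imI, sq_nonneg q.1.imJ,
      sq_nonneg q.1.imK]))

theorem hasSum_log_one_sub_polar {r : ℝ} (hr : 0 ≤ r) (hr1 : r < 1) (θ : ℝ) :
    HasSum (fun n : ℕ => r ^ n * Real.cos (n * θ) / n)
      (-(Real.log (1 - 2 * r * Real.cos θ + r ^ 2) / 2)) := by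
  have hz : ‖(r : ℂ) * Complex.exp (θ * Complex.I)‖ < 1 := by
    simpa [Complex.norm_exp_ofReal_mul_I, abs_of_nonneg hr] using hr1
  have h := Complex.hasSum_re (Complex.hasSum_taylorSeries_neg_log hz)
  have hn : ‖1 - (r : ℂ) * Complex.exp (θ * Complex.I)‖ ^ 2 =
      1 - 2 * r * Real.cos θ + r ^ 2 := by
    rw [← Complex.normSq_eq_norm_sq, Complex.normSq_apply]
    simp [Complex.exp_ofReal_mul_I_re, Complex.exp_ofReal_mul_I_im]
    linear_combination r ^ 2 * Real.sin_sq_add_cos_sq θ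
  rw [← hn, Real.log_pow]
  convert h using 1
  · funext n
    rw [mul_pow, ← Complex.exp_nat_mul, ← mul_assoc, Complex.div_natCast_re, ← Complex.ofReal_pow,
      Complex.re_ofReal_mul, ← Complex.ofReal_natCast, ← Complex.ofReal_mul,
      Complex.exp_ofReal_mul_I_re]
  · rw [Complex.neg_re, Complex.log_re]
    push_cast
    ring

theorem hasSum_log_quadNormSq {r : ℝ} (hr : 0 ≤ r) (hr1 : r < 1) (φ : ℝ) {x : ℝ}
    (hx : x ∈ Set.Icc (-1 : ℝ) 1) :
    HasSum (fun n : ℕ => -(2 * r ^ n * Real.cos (n * φ) / n) * (T ℝ n).eval x)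
      (Real.log (quadNormSq (r * Real.cos φ) (r ^ 2) x) / 2) := by
  obtain ⟨θ, rfl⟩ : ∃ θ, Real.cos θ = x := ⟨_, Real.cos_arccos hx.1 hx.2⟩
  have h := ((hasSum_log_one_sub_polar hr hr1 (φ - θ)).add
    (hasSum_log_one_sub_polar hr hr1 (φ + θ))).neg
  have hpos : ∀ t, 0 < 1 - 2 * r * Real.cos t + r ^ 2 := fun t => by
    nlinarith [Real.cos_le_one t, mul_pos (sub_pos.mpr hr1) (sub_pos.mpr hr1)]
  have hprod : quadNormSq (r * Real.cos φ) (r ^ 2) (Real.cos θ) =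
      (1 - 2 * r * Real.cos (φ - θ) + r ^ 2) * (1 - 2 * r * Real.cos (φ + θ) + r ^ 2) := by
    rw [quadNormSq, Real.cos_sub, Real.cos_add]
    linear_combination (4 * r ^ 2 * (1 - Real.cos θ ^ 2)) * Real.sin_sq_add_cos_sq φ
      + 4 * r ^ 2 * (Real.sin φ ^ 2) * Real.sin_sq_add_cos_sq θ
  have hlog : Real.log (quadNormSq (r * Real.cos φ) (r ^ 2) (Real.cos θ)) / 2 =
      -(-(Real.log (1 - 2 * r * Real.cos (φ - θ) + r ^ 2) / 2) +
        -(Real.log (1 - 2 * r * Real.cos (φ + θ) + r ^ 2) / 2)) := by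
    rw [hprod, Real.log_mul (hpos _).ne' (hpos _).ne']
    ring
  rw [hlog]
  refine (congrArg (HasSum · _) (funext fun n => ?_)).mpr h
  rw [T_real_cos, mul_sub, mul_add, Real.cos_sub, Real.cos_add]
  push_cast
  ring

theorem integrable_log_quadNormSq_of_lt_one {r c : ℝ} (hr : 0 ≤ r) (hr1 : r < 1)
    (hc : c ∈ Set.Icc (-1 : ℝ) 1) :
    Integrable (fun q : Metric.sphere (0 : Quaternion ℝ) 1 =>
      Real.log (quadNormSq (r * c) (r ^ 2) q.1.re) / 2) muH := by
  have hre := continuous_re_sphere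
  refine integrable_muH_of_continuous ((Continuous.log ?_ fun q =>
    (quadNormSq_pos hr hr1 (re_mem_Icc q) hc).ne').div_const 2)
  unfold quadNormSq
  fun_prop

theorem integral_log_quadNormSq_of_lt_one {r : ℝ} (hr : 0 ≤ r) (hr1 : r < 1) (φ : ℝ) :
    ∫ q : Metric.sphere (0 : Quaternion ℝ) 1,
      Real.log (quadNormSq (r * Real.cos φ) (r ^ 2) q.1.re) / 2 ∂muH =
      r ^ 2 * Real.cos (2 * φ) / 2 := by
  have hre := continuous_re_sphere
  let F : ℕ → Metric.sphere (0 : Quaternion ℝ) 1 → ℝ := fun n q =>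
    -(2 * r ^ n * Real.cos (n * φ) / n) * (T ℝ n).eval q.1.re
  have hF : ∀ n, Integrable (F n) muH := fun n => integrable_muH_of_continuous (by fun_prop)
  have hbound : ∀ n q, ‖F n q‖ ≤ 2 * r ^ n := fun n q => by
    have hT : |(T ℝ n).eval q.1.re| ≤ 1 :=
      abs_eval_T_real_le_one n (abs_le.mpr (re_mem_Icc q))
    have hc := Real.abs_cos_le_one (n * φ)
    have hn : |(n : ℝ)|⁻¹ ≤ 1 := by
      rw [Nat.abs_cast]
      exact Nat.cast_inv_le_one n
    have hr0 : 0 ≤ 2 * r ^ n := by positivity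
    rw [Real.norm_eq_abs, abs_mul, abs_neg, div_eq_mul_inv, abs_mul, abs_mul, abs_inv,
      abs_of_nonneg hr0]
    calc 2 * r ^ n * |Real.cos (n * φ)| * |(n : ℝ)|⁻¹ * |(T ℝ n).eval q.1.re|
        ≤ 2 * r ^ n * 1 * 1 * 1 := by gcongr
      _ = 2 * r ^ n := by ring
  have hsummable : Summable fun n => ∫ q, ‖F n q‖ ∂muH := by
    refine Summable.of_nonneg_of_le (fun n => integral_nonneg fun q => norm_nonneg _)
      (fun n => ?_) ((summable_geometric_of_lt_one hr hr1).mul_left 2)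
    refine (integral_mono (hF n).norm (integrable_const (2 * r ^ n)) (hbound n)).trans ?_
    simp
  have h := hasSum_integral_of_summable_integral_norm hF hsummable
  have htsum : ∀ q, ∑' n, F n q = Real.log (quadNormSq (r * Real.cos φ) (r ^ 2) q.1.re) / 2 :=
    fun q => (hasSum_log_quadNormSq hr hr1 φ (re_mem_Icc q)).tsum_eq
  simp only [htsum] at h
  refine h.unique ?_
  have hF2 : ∫ q, F 2 q ∂muH = r ^ 2 * Real.cos (2 * φ) / 2 := by
    simp only [F]
    rw [integral_const_mul, integral_chebyshevT_re 2 two_ne_zero]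
    push_cast
    simp
    ring
  rw [← hF2]
  refine hasSum_single 2 fun n hn => ?_
  simp only [F]
  rw [integral_const_mul]
  rcases eq_or_ne n 0 with rfl | hn0
  · simp
  · rw [integral_chebyshevT_re n hn0, if_neg hn, mul_zero]

theorem measurable_log_quadNormSq (c d : ℝ) :
    Measurable fun q : Metric.sphere (0 : Quaternion ℝ) 1 =>
      Real.log (quadNormSq c d q.1.re) / 2 := by
  have hre := continuous_re_sphere
  refine (Real.measurable_log.comp (Continuous.measurable ?_)).div_const 2
  unfold quadNormSq
  fun_prop

theorem integral_log_quadNormSq_one (φ : ℝ) :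
    ∫ q : Metric.sphere (0 : Quaternion ℝ) 1,
      Real.log (quadNormSq (1 * Real.cos φ) (1 ^ 2) q.1.re) / 2 ∂muH =
      1 ^ 2 * Real.cos (2 * φ) / 2 := by
  let r : ℕ → ℝ := fun n => 1 - 1 / ((n : ℝ) + 2)
  have hr2 : ∀ n, 1 / 2 ≤ r n := fun n => by
    have : 1 / ((n : ℝ) + 2) ≤ 1 / 2 := by gcongr; linarith [n.cast_nonneg (α := ℝ)]
    simp only [r]
    linarith
  have hr0 : ∀ n, 0 ≤ r n := fun n => by linarith [hr2 n]
  have hr1 : ∀ n, r n < 1 := fun n => by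
    have : 0 < 1 / ((n : ℝ) + 2) := by positivity
    simp only [r]
    linarith
  have hrlim : Tendsto r atTop (𝓝 1) := by
    have h := (tendsto_const_div_atTop_nhds_zero_nat (1 : ℝ)).comp (tendsto_add_atTop_nat 2)
    simpa [r, Function.comp_def] using h.const_sub 1
  have hc : Real.cos φ ∈ Set.Icc (-1 : ℝ) 1 := Real.cos_mem_Icc φ
  let f : ℝ → Metric.sphere (0 : Quaternion ℝ) 1 → ℝ := fun s q =>
    Real.log (quadNormSq (s * Real.cos φ) (s ^ 2) q.1.re) / 2
  have hmeas : ∀ s, Measurable (f s) := fun s => measurable_log_quadNormSq _ _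
  have hPlim : ∀ x, Tendsto (fun n => quadNormSq (r n * Real.cos φ) (r n ^ 2) x) atTop
      (𝓝 (quadNormSq (1 * Real.cos φ) (1 ^ 2) x)) := fun x => by
    have : Continuous fun s : ℝ => quadNormSq (s * Real.cos φ) (s ^ 2) x := by
      unfold quadNormSq
      fun_prop
    exact (this.tendsto 1).comp hrlim
  have hPone : ∀ x, quadNormSq (1 * Real.cos φ) (1 ^ 2) x = 4 * (x - Real.cos φ) ^ 2 :=
    fun x => by
      rw [quadNormSq_mul_cos]
      ring
  have hfle : ∀ n q, f (r n) q ≤ Real.log 32 / 2 := fun n q => by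
    have := Real.log_le_log (quadNormSq_pos (hr0 n) (hr1 n) (re_mem_Icc q) hc)
      (quadNormSq_le (hr0 n) (hr1 n).le (re_mem_Icc q) hc)
    simp only [f]
    linarith
  have hmeas_sub : ∀ s, Measurable fun q => ENNReal.ofReal (Real.log 32 / 2 - f s q) :=
    fun s => (Measurable.const_sub (hmeas s) _).ennreal_ofReal
  have hlog32 : 0 < Real.log 32 := Real.log_pos (by norm_num)
  have hfint : ∀ n, Integrable (f (r n)) muH := fun n =>
    integrable_log_quadNormSq_of_lt_one (hr0 n) (hr1 n) hc
  have hfatou : ∫⁻ q, liminf (fun n => ENNReal.ofReal (Real.log 32 / 2 - f (r n) q)) atTop ∂muH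
      ≤ ENNReal.ofReal (Real.log 32 / 2 + 1) := by
    refine (lintegral_liminf_le fun n => hmeas_sub (r n)).trans ?_
    refine (liminf_le_liminf (v := fun _ => ENNReal.ofReal (Real.log 32 / 2 + 1))
      (.of_forall fun n => ?_)).trans (liminf_const _).le
    have hint : Integrable (fun q => Real.log 32 / 2 - f (r n) q) muH :=
      (integrable_const _).sub (hfint n)
    rw [← ofReal_integral_eq_lintegral_ofReal hint
      (.of_forall fun q => sub_nonneg.mpr (hfle n q)),
      integral_sub (integrable_const _) (hfint n),
      integral_log_quadNormSq_of_lt_one (hr0 n) (hr1 n)]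
    refine ENNReal.ofReal_le_ofReal ?_
    have h1 := Real.neg_one_le_cos (2 * φ)
    have h2 : r n ^ 2 ≤ 1 := by nlinarith [hr0 n, hr1 n]
    have h3 : -1 ≤ r n ^ 2 * Real.cos (2 * φ) := by nlinarith [sq_nonneg (r n)]
    simp
    linarith
  have hlt := ae_lt_top' (Measurable.liminf fun n => hmeas_sub (r n)).aemeasurable
    (hfatou.trans_lt ENNReal.ofReal_lt_top).ne
  have hne : ∀ᵐ q ∂muH, q.1.re ≠ Real.cos φ := by
    filter_upwards [hlt] with q hq heq
    refine hq.ne (Tendsto.liminf_eq ?_)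
    refine ENNReal.tendsto_ofReal_atTop.comp ?_
    refine tendsto_atTop_add_const_left _ _ (tendsto_neg_atBot_atTop.comp ?_)
    refine Tendsto.atBot_div_const two_pos (Real.tendsto_log_nhdsGT_zero.comp ?_)
    refine tendsto_nhdsWithin_iff.mpr ⟨?_, .of_forall fun n =>
      quadNormSq_pos (hr0 n) (hr1 n) (re_mem_Icc q) hc⟩
    rw [heq]
    have := hPlim (Real.cos φ)
    rwa [hPone, sub_self, zero_pow two_ne_zero, mul_zero] at this
  have hflim : ∀ᵐ q ∂muH, Tendsto (fun n => f (r n) q) atTop (𝓝 (f 1 q)) := by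
    filter_upwards [hne] with q hq
    refine ((hPlim q.1.re).log ?_).div_const 2
    rw [hPone]
    have := sub_ne_zero.mpr hq
    positivity
  have hf1 : Integrable (fun q => Real.log 32 / 2 - f 1 q) muH := by
    refine ⟨(measurable_const.sub (hmeas 1)).aestronglyMeasurable, ?_⟩
    rw [hasFiniteIntegral_iff_ofReal]
    · refine lt_of_le_of_lt (le_of_eq (lintegral_congr_ae ?_))
        (hfatou.trans_lt ENNReal.ofReal_lt_top)
      filter_upwards [hflim] with q hq
      exact (ENNReal.tendsto_ofReal (hq.const_sub _)).liminf_eq.symm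
    · filter_upwards [hflim] with q hq
      exact sub_nonneg.mpr (le_of_tendsto' hq fun n => hfle n q)
  have hconv := tendsto_integral_of_dominated_convergence
    (fun q => |Real.log 32 / 2 - f 1 q| + Real.log 32) (fun n => (hfint n).1)
    (hf1.abs.add (integrable_const _)) (fun n => by
      filter_upwards [hne] with q hq
      have hpos : 0 < (q.1.re - Real.cos φ) ^ 2 := by
        have := sub_ne_zero.mpr hq
        positivity
      have hlow : Real.log (quadNormSq (1 * Real.cos φ) (1 ^ 2) q.1.re) - Real.log 4 ≤
          Real.log (quadNormSq (r n * Real.cos φ) (r n ^ 2) q.1.re) := by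
        rw [hPone, Real.log_mul four_ne_zero hpos.ne', add_sub_cancel_left]
        refine Real.log_le_log hpos ?_
        refine le_trans ?_ (le_quadNormSq (hr0 n) (re_mem_Icc q) hc)
        have : 1 ≤ 4 * r n ^ 2 := by nlinarith [hr2 n]
        nlinarith
      have h4 : Real.log 4 ≤ Real.log 32 := Real.log_le_log (by norm_num) (by norm_num)
      have hup := hfle n q
      have habs := le_abs_self (Real.log 32 / 2 - f 1 q)
      have habs0 := abs_nonneg (Real.log 32 / 2 - f 1 q)
      rw [Real.norm_eq_abs, abs_le]
      simp only [f] at hup habs habs0 ⊢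
      generalize Real.log (quadNormSq (r n * Real.cos φ) (r n ^ 2) q.1.re) = a at *
      generalize Real.log (quadNormSq (1 * Real.cos φ) (1 ^ 2) q.1.re) = b at *
      constructor <;> linarith) hflim
  refine tendsto_nhds_unique hconv ?_
  simp only [f, integral_log_quadNormSq_of_lt_one (hr0 _) (hr1 _)]
  exact (((hrlim.pow 2).mul_const _).div_const 2)

theorem integral_log_quadNormSq {r : ℝ} (hr : 0 ≤ r) (hr1 : r ≤ 1) (φ : ℝ) :
    ∫ q : Metric.sphere (0 : Quaternion ℝ) 1,
      Real.log (quadNormSq (r * Real.cos φ) (r ^ 2) q.1.re) / 2 ∂muH =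
      r ^ 2 * Real.cos (2 * φ) / 2 := by
  rcases hr1.lt_or_eq with h | rfl
  · exact integral_log_quadNormSq_of_lt_one hr h φ
  · exact integral_log_quadNormSq_one φ

/-- Jensen formula for `m_ℍ(x² - 2(Re α)x + |α|²)`. -/
theorem mahlerH_quadratic (α : Quaternion ℝ) (hα : α ≠ 0) (φ : ℝ)
    (hφ : φ = Real.arccos (α.re / ‖α‖)) :
    (‖α‖ ≤ 1 →
      mahlerH (fun q =>
          q ^ 2 - ((2 * α.re : ℝ) : Quaternion ℝ) * q + ((‖α‖ ^ 2 : ℝ) : Quaternion ℝ)) =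
        ‖α‖ ^ 2 * Real.cos (2 * φ) / 2) ∧
    (1 < ‖α‖ →
      mahlerH (fun q =>
          q ^ 2 - ((2 * α.re : ℝ) : Quaternion ℝ) * q + ((‖α‖ ^ 2 : ℝ) : Quaternion ℝ)) =
        Real.cos (2 * φ) / (2 * ‖α‖ ^ 2) + 2 * Real.log ‖α‖) := by
  have hα0 : 0 < ‖α‖ := norm_pos_iff.mpr hα
  have hle : |α.re| ≤ ‖α‖ := by
    refine abs_le_of_sq_le_sq ?_ hα0.le
    have h := Quaternion.normSq_eq_norm_mul_self α
    rw [Quaternion.normSq_def'] at h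
    nlinarith [sq_nonneg α.imI, sq_nonneg α.imJ, sq_nonneg α.imK]
  have hcos : Real.cos φ = α.re / ‖α‖ := by
    rw [hφ, Real.cos_arccos]
    · rw [le_div_iff₀ hα0]
      linarith [(abs_le.mp hle).1]
    · rw [div_le_one hα0]
      exact (abs_le.mp hle).2
  have hre : α.re = ‖α‖ * Real.cos φ := by
    rw [hcos]
    field_simp
  unfold mahlerH
  simp only [log_norm_quadratic]
  generalize ‖α‖ = R at *
  refine ⟨fun h1 => ?_, fun h1 => ?_⟩
  · rw [hre]
    exact integral_log_quadNormSq hα0.le h1 φ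
  · have hinv : R⁻¹ < 1 := inv_lt_one_of_one_lt₀ h1
    have hinv0 : 0 ≤ R⁻¹ := inv_nonneg.mpr hα0.le
    have hscale : ∀ q : Metric.sphere (0 : Quaternion ℝ) 1,
        Real.log (quadNormSq α.re (R ^ 2) q.1.re) / 2 =
        Real.log (quadNormSq (R⁻¹ * Real.cos φ) (R⁻¹ ^ 2) q.1.re) / 2 + 2 * Real.log R := by
      intro q
      have hP : quadNormSq α.re (R ^ 2) q.1.re =
          quadNormSq (R⁻¹ * Real.cos φ) (R⁻¹ ^ 2) q.1.re * R ^ 4 := by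
        rw [hre, quadNormSq, quadNormSq]
        field_simp
        ring
      rw [hP, Real.log_mul (quadNormSq_pos hinv0 hinv (re_mem_Icc q) (Real.cos_mem_Icc φ)).ne'
        (by positivity), Real.log_pow]
      push_cast
      ring
    simp only [hscale]
    rw [integral_add (integrable_log_quadNormSq_of_lt_one hinv0 hinv (Real.cos_mem_Icc φ))
      (integrable_const _), integral_log_quadNormSq hinv0 hinv.le]
    simp
    field_simp
end

section
/- With i the standard imaginary unit of ℍ, the quaternionic Mahler measures of the ∗-squares and ∗-cubes of q − i are: m_ℍ(q ↦ q² − 2qi − 1) = 5/6 and m_ℍ(q ↦ q³ − 3q²i − 3q + i) = 31/4 − 2π. -/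
open MeasureTheory Quaternion

/-- The standard imaginary unit `i` of the quaternions. -/
noncomputable def qI : Quaternion ℝ := ⟨0, 1, 0, 0⟩
/-- The standard imaginary unit `j` of the quaternions. -/
noncomputable def qJ : Quaternion ℝ := ⟨0, 0, 1, 0⟩
/-- The standard imaginary unit `k` of the quaternions. -/
noncomputable def qK : Quaternion ℝ := ⟨0, 0, 0, 1⟩

section LogCosIntegrals
open Real intervalIntegral

lemma intervalIntegrable_log_one_add_cos (a b : ℝ) :
    IntervalIntegrable (fun x => log (1 + cos x)) volume a b := by
  have h : MeromorphicOn (fun x : ℝ => 1 + cos x) (Set.uIcc a b) := fun x _ =>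
    (analyticAt_const.add analyticAt_cos).meromorphicAt
  exact h.intervalIntegrable_log

lemma integral_zero_pi_comp_pi_sub (f : ℝ → ℝ) :
    ∫ x in 0..π, f (π - x) = ∫ x in 0..π, f x := by
  simp [integral_comp_sub_left]

lemma one_add_cos_pos {x : ℝ} (hx : x ∈ Set.Ioo 0 π) : 0 < 1 + cos x := by
  have := cos_lt_cos_of_nonneg_of_le_pi hx.1.le le_rfl hx.2
  rw [cos_pi] at this
  linarith

lemma integral_log_one_add_cos : ∫ x in 0..π, log (1 + cos x) = -π * log 2 := by
  have hrefl : ∫ x in 0..π, log (1 - cos x) = ∫ x in 0..π, log (1 + cos x) := by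
    rw [← integral_zero_pi_comp_pi_sub (fun x => log (1 + cos x))]
    simp only [cos_pi_sub]
    rfl
  have hgint : IntervalIntegrable (fun x => log (1 - cos x)) volume 0 π := by
    have h : MeromorphicOn (fun x : ℝ => 1 - cos x) (Set.uIcc 0 π) := fun x _ =>
      (analyticAt_const.sub analyticAt_cos).meromorphicAt
    exact h.intervalIntegrable_log
  have hsum : ∫ x in 0..π, (log (1 + cos x) + log (1 - cos x)) =
      ∫ x in 0..π, 2 * log (sin x) := by
    refine integral_congr_Ioo_of_le pi_pos.le fun x hx => ?_
    have h1 := one_add_cos_pos hx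
    have hs := sin_pos_of_mem_Ioo hx
    have h2 : 0 < 1 - cos x := by nlinarith [sin_sq_add_cos_sq x]
    rw [← log_mul h1.ne' h2.ne', show (1 + cos x) * (1 - cos x) = sin x ^ 2 by
      rw [sin_sq]; ring, log_pow]
    norm_num
  rw [integral_add (intervalIntegrable_log_one_add_cos _ _) hgint, hrefl,
    intervalIntegral.integral_const_mul,
    integral_log_sin_zero_pi] at hsum
  linarith

lemma continuous_sin_mul_log_one_add_cos : Continuous fun x => sin x * log (1 + cos x) := by
  have h : (fun x => sin x * log (1 + cos x)) = fun x =>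
      2 * (sin (x / 2) * (cos (x / 2) * log 2 + 2 * (cos (x / 2) * log (cos (x / 2))))) := by
    funext x
    have hs : sin x = 2 * sin (x / 2) * cos (x / 2) := by
      rw [← sin_two_mul]; congr 1; ring
    have hc : 1 + cos x = 2 * cos (x / 2) ^ 2 := by
      rw [show x = 2 * (x / 2) by ring, cos_two_mul]; ring_nf
    rw [hs, hc]
    by_cases h0 : cos (x / 2) = 0
    · simp [h0]
    · rw [log_mul two_ne_zero (pow_ne_zero _ h0), log_pow]
      push_cast
      ring
  rw [h]
  have := continuous_mul_log.comp (show Continuous fun x : ℝ => cos (x / 2) by fun_prop)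
  simp only [Function.comp_def] at this
  fun_prop

/-- Integration by parts against `log (1 + cos x)`, for a primitive `S` divisible by `sin`. -/
lemma integral_mul_log_one_add_cos {S S' K : ℝ → ℝ} (hS : ∀ x, HasDerivAt S (S' x) x)
    (hS' : Continuous S') (hK : Continuous K) (hSK : ∀ x, S x = sin x * K x) :
    ∫ x in 0..π, S' x * log (1 + cos x) = ∫ x in 0..π, K x * (1 - cos x) := by
  have h1 : IntervalIntegrable (fun x => S' x * log (1 + cos x)) volume 0 π :=
    (intervalIntegrable_log_one_add_cos 0 π).continuousOn_mul hS'.continuousOn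
  have h2 : IntervalIntegrable (fun x => K x * (1 - cos x)) volume 0 π :=
    Continuous.intervalIntegrable (by fun_prop) _ _
  have hcont : Continuous fun x => S x * log (1 + cos x) := by
    have := hK.mul continuous_sin_mul_log_one_add_cos
    refine this.congr fun x => ?_
    simp only [Pi.mul_apply, hSK]
    ring
  have key := integral_eq_sub_of_hasDerivAt_of_le pi_pos.le hcont.continuousOn
    (f' := fun x => S' x * log (1 + cos x) - K x * (1 - cos x)) (fun x hx => by
      have hpos := one_add_cos_pos hx
      have hd := (hS x).mul (((hasDerivAt_cos x).const_add 1).log hpos.ne')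
      refine hd.congr_deriv ?_
      rw [hSK]
      field_simp
      linear_combination (-K x) * sin_sq_add_cos_sq x) (h1.sub h2)
  rw [integral_sub h1 h2] at key
  have hS0 : S 0 = 0 := by simp [hSK]
  have hSpi : S π = 0 := by simp [hSK]
  rw [hS0, hSpi] at key
  linarith

lemma integral_cos_mul_log_one_add_cos : ∫ x in 0..π, cos x * log (1 + cos x) = π := by
  rw [integral_mul_log_one_add_cos (S := sin) (K := fun _ => 1) hasDerivAt_sin continuous_cos
    continuous_const (by simp)]
  simp

lemma integral_cos_sq_mul_log_one_add_cos :
    ∫ x in 0..π, cos x ^ 2 * log (1 + cos x) = -π / 2 * log 2 - π / 4 := by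
  have h := integral_mul_log_one_add_cos (S := fun x => sin x * (cos x / 2))
    (S' := fun x => cos x ^ 2 - 1 / 2) (K := fun x => cos x / 2)
    (fun x => by
      refine ((hasDerivAt_sin x).mul ((hasDerivAt_cos x).div_const 2)).congr_deriv ?_
      linear_combination (-1 / 2) * sin_sq_add_cos_sq x)
    (by fun_prop) (by fun_prop) (fun _ => rfl)
  have h1 : IntervalIntegrable (fun x => cos x ^ 2 * log (1 + cos x)) volume 0 π :=
    (intervalIntegrable_log_one_add_cos 0 π).continuousOn_mul (by fun_prop)
  have h2 : ∫ x in 0..π, cos x / 2 * (1 - cos x) = -π / 4 := by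
    have : ∀ x : ℝ, cos x / 2 * (1 - cos x) = (1 / 2) * cos x - (1 / 2) * cos x ^ 2 := by
      intro x; ring
    simp_rw [this]
    rw [integral_sub (Continuous.intervalIntegrable (by fun_prop) _ _)
      (Continuous.intervalIntegrable (by fun_prop) _ _), intervalIntegral.integral_const_mul,
      intervalIntegral.integral_const_mul,
      integral_cos, integral_cos_sq]
    simp
    ring
  simp_rw [sub_mul] at h
  rw [integral_sub h1 ((intervalIntegrable_log_one_add_cos 0 π).const_mul _),
    intervalIntegral.integral_const_mul,
    integral_log_one_add_cos, h2] at h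
  linarith

lemma integral_cos_cube_mul_log_one_add_cos :
    ∫ x in 0..π, cos x ^ 3 * log (1 + cos x) = 5 / 6 * π := by
  rw [integral_mul_log_one_add_cos (S := fun x => sin x - sin x ^ 3 / 3)
    (K := fun x => 2 / 3 + cos x ^ 2 / 3)
    (fun x => by
      refine ((hasDerivAt_sin x).sub (((hasDerivAt_sin x).pow 3).div_const 3)).congr_deriv ?_
      simp only [Nat.cast_ofNat]
      linear_combination (-cos x) * sin_sq_add_cos_sq x) (by fun_prop) (by fun_prop)
    (fun x => by linear_combination (-sin x / 3) * sin_sq_add_cos_sq x)]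
  have : ∀ x : ℝ, (2 / 3 + cos x ^ 2 / 3) * (1 - cos x) =
      2 / 3 + (1 / 3) * cos x ^ 2 - ((2 / 3) * cos x + (1 / 3) * cos x ^ 3) := by
    intro x; ring
  simp_rw [this]
  rw [integral_sub (Continuous.intervalIntegrable (by fun_prop) _ _)
      (Continuous.intervalIntegrable (by fun_prop) _ _),
    integral_add (Continuous.intervalIntegrable (by fun_prop) _ _)
      (Continuous.intervalIntegrable (by fun_prop) _ _),
    integral_add (Continuous.intervalIntegrable (by fun_prop) _ _)
      (Continuous.intervalIntegrable (by fun_prop) _ _), intervalIntegral.integral_const_mul,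
      intervalIntegral.integral_const_mul,
    intervalIntegral.integral_const_mul, integral_cos, integral_cos_sq, integral_cos_pow_three]
  simp
  ring

lemma four_sub_sq_mul_sin_sq_pos {t : ℝ} (ht : t ^ 2 ≤ 1) (x : ℝ) :
    0 < 4 - t ^ 2 * sin x ^ 2 := by
  nlinarith [sin_sq_le_one x, sq_nonneg (sin x), sq_nonneg t]

lemma integral_inv_four_sub_sq_mul_sin_sq {t : ℝ} (ht : t ^ 2 ≤ 1) :
    ∫ x in 0..π, (4 - t ^ 2 * sin x ^ 2)⁻¹ = π / 2 * (√(4 - t ^ 2))⁻¹ := by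
  have hr : 0 < √(4 - t ^ 2) := sqrt_pos.2 (by linarith)
  have hr2 : √(4 - t ^ 2) ^ 2 = 4 - t ^ 2 := sq_sqrt (by linarith)
  set r := √(4 - t ^ 2)
  have hden : ∀ x, 0 < 2 * cos x ^ 2 + r * sin x ^ 2 := by
    intro x
    by_cases h : cos x = 0
    · have : sin x ^ 2 = 1 := by rw [sin_sq, h]; ring
      rw [this]; positivity
    · positivity
  have hcont : Continuous fun x => (4 - t ^ 2 * sin x ^ 2)⁻¹ :=
    Continuous.inv₀ (by fun_prop) fun x => (four_sub_sq_mul_sin_sq_pos ht x).ne'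
  rw [integral_eq_sub_of_hasDerivAt (f := fun x =>
    (2 * r)⁻¹ * (x + arctan ((r - 2) * (sin x * cos x) / (2 * cos x ^ 2 + r * sin x ^ 2))))
    (fun x _ => ?_) (hcont.intervalIntegrable _ _)]
  · simp
    ring
  · have hd0 := (hden x).ne'
    have hn := ((hasDerivAt_sin x).mul (hasDerivAt_cos x)).const_mul (r - 2)
    have hd := (((hasDerivAt_cos x).pow 2).const_mul 2).add (((hasDerivAt_sin x).pow 2).const_mul r)
    have hq : HasDerivAt
        (fun x => (r - 2) * (sin x * cos x) / (2 * cos x ^ 2 + r * sin x ^ 2))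
        ((r - 2) * (2 * cos x ^ 2 - r * sin x ^ 2) / (2 * cos x ^ 2 + r * sin x ^ 2) ^ 2) x := by
      refine (hn.div hd hd0).congr_deriv ?_
      simp only [Pi.mul_apply, Pi.add_apply, Pi.pow_apply]
      congr 1
      push_cast
      linear_combination
        (r - 2) * (2 * cos x ^ 2 - r * sin x ^ 2) * sin_sq_add_cos_sq x
    refine (((hasDerivAt_id x).add hq.arctan).const_mul (2 * r)⁻¹).congr_deriv ?_
    have e1 : 4 - t ^ 2 * sin x ^ 2 = 4 * cos x ^ 2 + r ^ 2 * sin x ^ 2 := by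
      rw [hr2, cos_sq']; ring
    have e2 : 1 + ((r - 2) * (sin x * cos x) / (2 * cos x ^ 2 + r * sin x ^ 2)) ^ 2 =
        (4 * cos x ^ 2 + r ^ 2 * sin x ^ 2) / (2 * cos x ^ 2 + r * sin x ^ 2) ^ 2 := by
      field_simp
      linear_combination (4 * cos x ^ 2 + r ^ 2 * sin x ^ 2) * sin_sq_add_cos_sq x
    have h4 := (four_sub_sq_mul_sin_sq_pos ht x).ne'
    rw [e1] at h4 ⊢
    rw [e2]
    field_simp
    linear_combination (2 * r) * sin_sq_add_cos_sq x

lemma integral_inv_sqrt_four_sub_sq : ∫ t in (0 : ℝ)..1, (√(4 - t ^ 2))⁻¹ = π / 6 := by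
  have hpos : ∀ t ∈ Set.uIcc (0 : ℝ) 1, 0 < 4 - t ^ 2 := by
    intro t ht
    rw [Set.uIcc_of_le zero_le_one] at ht
    nlinarith [ht.1, ht.2]
  rw [integral_eq_sub_of_hasDerivAt (f := fun t => arcsin (t / 2)) ?hderiv
    (ContinuousOn.intervalIntegrable ?hcont)]
  case hderiv =>
    intro t ht
    rw [Set.uIcc_of_le zero_le_one] at ht
    have h := (hasDerivAt_arcsin (x := t / 2) (by linarith [ht.1]) (by linarith [ht.2])).comp t
      ((hasDerivAt_id t).div_const 2)
    refine h.congr_deriv ?_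
    have : 4 - t ^ 2 = 2 ^ 2 * (1 - (t / 2) ^ 2) := by ring
    rw [this, sqrt_mul (by positivity), sqrt_sq (by norm_num)]
    simp
  case hcont =>
    exact ContinuousOn.inv₀ (by fun_prop) fun t ht => (sqrt_pos.2 (hpos t ht)).ne'
  · have : arcsin (1 / 2) = π / 6 := by
      rw [← sin_pi_div_six, arcsin_sin] <;> linarith [pi_pos]
    simpa using this

lemma sin_mul_integral_inv (x : ℝ) :
    (log (2 + sin x) - log (2 - sin x)) / 4 =
      sin x * ∫ t in (0 : ℝ)..1, (4 - t ^ 2 * sin x ^ 2)⁻¹ := by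
  have hne : ∀ t ∈ Set.uIcc (0 : ℝ) 1, t ^ 2 ≤ 1 ∧ 0 < 2 + t * sin x ∧ 0 < 2 - t * sin x := by
    intro t ht
    rw [Set.uIcc_of_le zero_le_one] at ht
    have := neg_one_le_sin x
    have := sin_le_one x
    refine ⟨?_, ?_, ?_⟩ <;> nlinarith [ht.1, ht.2]
  rw [← intervalIntegral.integral_const_mul, integral_eq_sub_of_hasDerivAt
    (f := fun t => (log (2 + t * sin x) - log (2 - t * sin x)) / 4) ?hderiv
    (ContinuousOn.intervalIntegrable ?hcont)]
  case hderiv =>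
    intro t ht
    obtain ⟨h0, h1, h2⟩ := hne t ht
    have hm := (hasDerivAt_id t).mul_const (sin x)
    have h := (((hm.const_add 2).log h1.ne').sub ((hm.const_sub 2).log h2.ne')).div_const 4
    refine h.congr_deriv ?_
    simp only [id_eq]
    rw [show 4 - t ^ 2 * sin x ^ 2 = (2 + t * sin x) * (2 - t * sin x) by ring,
      neg_div, sub_neg_eq_add, one_mul, div_add_div _ _ h1.ne' h2.ne', div_div,
      ← div_eq_mul_inv, div_eq_div_iff (by positivity) (by positivity)]
    ring
  case hcont =>
    refine ContinuousOn.mul continuousOn_const (ContinuousOn.inv₀ (by fun_prop) fun t ht => ?_)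
    exact (four_sub_sq_mul_sin_sq_pos (hne t ht).1 x).ne'
  · simp

lemma integral_cos_div_mul_log_one_add_cos :
    ∫ x in 0..π, cos x / (cos x ^ 2 + 3) * log (1 + cos x) = π ^ 2 / 12 := by
  -- truncating `t ^ 2` at `1` makes the integrand jointly continuous on the whole plane
  set K : ℝ → ℝ → ℝ := fun x t => (4 - min (t ^ 2) 1 * sin x ^ 2)⁻¹ with hKdef
  have hK2 : Continuous (Function.uncurry K) := by
    refine Continuous.inv₀ (by fun_prop) fun p => ?_
    have h1 : min (p.2 ^ 2) 1 ≤ 1 := min_le_right _ _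
    have h0 : 0 ≤ min (p.2 ^ 2) 1 := le_min (sq_nonneg _) zero_le_one
    have := sin_sq_le_one p.1
    have := sq_nonneg (sin p.1)
    exact (show 0 < 4 - min (p.2 ^ 2) 1 * sin p.1 ^ 2 by nlinarith).ne'
  have hmin : ∀ t ∈ Set.uIcc (0 : ℝ) 1, t ^ 2 ≤ 1 ∧ min (t ^ 2) 1 = t ^ 2 := by
    intro t ht
    rw [Set.uIcc_of_le zero_le_one] at ht
    have : t ^ 2 ≤ 1 := by nlinarith [ht.1, ht.2]
    exact ⟨this, min_eq_left this⟩
  have hKint : Continuous fun x => ∫ t in (0 : ℝ)..1, K x t :=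
    continuous_parametric_intervalIntegral_of_continuous' hK2 0 1
  rw [integral_mul_log_one_add_cos (S := fun x => (log (2 + sin x) - log (2 - sin x)) / 4)
    (S' := fun x => cos x / (cos x ^ 2 + 3)) (K := fun x => ∫ t in (0 : ℝ)..1, K x t)
    (fun x => ?hderiv) (Continuous.div (by fun_prop) (by fun_prop) fun x => by positivity) hKint
    (fun x => ?hfac)]
  case hderiv =>
    have h1 : 0 < 2 + sin x := by linarith [neg_one_le_sin x]
    have h2 : 0 < 2 - sin x := by linarith [sin_le_one x]
    refine (((((hasDerivAt_sin x).const_add 2).log h1.ne').sub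
      (((hasDerivAt_sin x).const_sub 2).log h2.ne')).div_const 4).congr_deriv ?_
    rw [show cos x ^ 2 + 3 = (2 + sin x) * (2 - sin x) by rw [cos_sq']; ring]
    field_simp
    ring
  case hfac =>
    rw [sin_mul_integral_inv]
    congr 1
    refine integral_congr fun t ht => ?_
    simp only [hKdef, (hmin t ht).2]
  have hodd : ∫ x in 0..π, (∫ t in (0 : ℝ)..1, K x t) * cos x = 0 := by
    have h := integral_zero_pi_comp_pi_sub fun x => (∫ t in (0 : ℝ)..1, K x t) * cos x
    simp only [hKdef, sin_pi_sub, cos_pi_sub, mul_neg, intervalIntegral.integral_neg] at h ⊢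
    linarith
  have hKcos : Continuous fun x => (∫ t in (0 : ℝ)..1, K x t) * cos x := hKint.mul continuous_cos
  simp_rw [mul_sub, mul_one]
  rw [integral_sub (hKint.intervalIntegrable _ _) (hKcos.intervalIntegrable _ _), hodd, sub_zero,
    intervalIntegral_intervalIntegral_swap]
  · rw [integral_congr (g := fun t => π / 2 * (√(4 - t ^ 2))⁻¹) fun t ht => ?_,
      intervalIntegral.integral_const_mul, integral_inv_sqrt_four_sub_sq]
    · ring
    · simp only [hKdef, (hmin t ht).2]
      exact integral_inv_four_sub_sq_mul_sin_sq (hmin t ht).1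
  · have hcompact := (isCompact_uIcc (a := 0) (b := π)).prod (isCompact_uIcc (a := (0 : ℝ)) (b := 1))
    exact (hK2.continuousOn.integrableOn_compact hcompact).mono_set
      (Set.prod_mono Set.uIoc_subset_uIcc Set.uIoc_subset_uIcc)

end LogCosIntegrals

section UnitDisk
open Real intervalIntegral

/-- The open unit disk in `ℝ × ℝ`. -/
def unitDisk : Set (ℝ × ℝ) := {p | p.1 ^ 2 + p.2 ^ 2 < 1}

lemma measurableSet_unitDisk : MeasurableSet unitDisk :=
  (isOpen_lt (by fun_prop) continuous_const).measurableSet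

lemma mem_unitDisk {p : ℝ × ℝ} : p ∈ unitDisk ↔ p.1 ^ 2 + p.2 ^ 2 < 1 := Iff.rfl

lemma setIntegral_unitDisk {h : ℝ × ℝ → ℝ} (hgint : IntegrableOn h unitDisk) :
    ∫ p in unitDisk, h p =
      ∫ a in (-1)..1, ∫ b in (-√(1 - a ^ 2))..√(1 - a ^ 2), h (a, b) := by
  have hinner : ∀ a, ∫ b, unitDisk.indicator h (a, b) =
      ∫ b in (-√(1 - a ^ 2))..√(1 - a ^ 2), h (a, b) := by
    intro a
    have hset : ∀ b, unitDisk.indicator h (a, b) =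
        (Set.Ioo (-√(1 - a ^ 2)) √(1 - a ^ 2)).indicator (fun b => h (a, b)) b := by
      intro b
      have : (a, b) ∈ unitDisk ↔ b ∈ Set.Ioo (-√(1 - a ^ 2)) √(1 - a ^ 2) := by
        rw [Set.mem_Ioo, ← Real.sq_lt, mem_unitDisk, lt_sub_iff_add_lt']
      by_cases hb : b ∈ Set.Ioo (-√(1 - a ^ 2)) √(1 - a ^ 2)
      · rw [Set.indicator_of_mem (this.2 hb), Set.indicator_of_mem hb]
      · rw [Set.indicator_of_notMem (mt this.1 hb), Set.indicator_of_notMem hb]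
    simp_rw [hset]
    rw [MeasureTheory.integral_indicator measurableSet_Ioo, integral_of_le,
      integral_Ioc_eq_integral_Ioo]
    linarith [sqrt_nonneg (1 - a ^ 2)]
  rw [← MeasureTheory.integral_indicator measurableSet_unitDisk, Measure.volume_eq_prod,
    integral_prod _ ((integrable_indicator_iff measurableSet_unitDisk).2 hgint)]
  simp_rw [hinner]
  rw [integral_of_le (by norm_num), setIntegral_eq_integral_of_forall_compl_eq_zero]
  intro a ha
  have : 1 - a ^ 2 ≤ 0 := by
    by_contra! hlt
    have := abs_lt.1 ((sq_lt_one_iff_abs_lt_one a).1 (by linarith))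
    exact ha ⟨this.1, this.2.le⟩
  simp [sqrt_eq_zero_of_nonpos this]

lemma integrableOn_log_unitDisk {g : ℝ × ℝ → ℝ} {n : ℕ} {M : ℝ} (hg : Measurable g)
    (hlow : ∀ p ∈ unitDisk, (1 - p.2) ^ n ≤ g p) (hup : ∀ p ∈ unitDisk, g p ≤ M) :
    IntegrableOn (fun p => log (g p)) unitDisk := by
  have hsub : unitDisk ⊆ Set.Ioc (-1) 1 ×ˢ Set.Ioc (-1) 1 := by
    intro p hp
    rw [mem_unitDisk] at hp
    have h1 := abs_lt.1 ((sq_lt_one_iff_abs_lt_one p.1).1 (by nlinarith [sq_nonneg p.2]))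
    have h2 := abs_lt.1 ((sq_lt_one_iff_abs_lt_one p.2).1 (by nlinarith [sq_nonneg p.1]))
    exact ⟨⟨h1.1, h1.2.le⟩, h2.1, h2.2.le⟩
  have hlog : IntegrableOn (fun b : ℝ => |log M| + n * |log (1 - b)|) (Set.Ioc (-1) 1) := by
    have h : IntervalIntegrable (fun b : ℝ => log (1 - b)) volume (-1) 1 := by
      have h : MeromorphicOn (fun x : ℝ => 1 - x) (Set.uIcc (-1) 1) := fun x _ =>
        (analyticAt_const.sub analyticAt_id).meromorphicAt
      exact h.intervalIntegrable_log
    rw [intervalIntegrable_iff_integrableOn_Ioc_of_le (by norm_num)] at h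
    exact (integrableOn_const (by simp)).add (h.abs.const_mul _)
  have hdom : IntegrableOn (fun p : ℝ × ℝ => |log M| + n * |log (1 - p.2)|) unitDisk := by
    refine IntegrableOn.mono_set ?_ hsub
    rw [IntegrableOn, Measure.volume_eq_prod, ← Measure.prod_restrict]
    exact hlog.comp_snd _
  refine Integrable.mono' hdom hg.log.aestronglyMeasurable ?_
  filter_upwards [ae_restrict_mem measurableSet_unitDisk] with p hp
  have hp1 : 0 < 1 - p.2 := by
    have := mem_unitDisk.1 hp
    nlinarith [sq_nonneg p.1]
  have hpow : 0 < (1 - p.2) ^ n := by positivity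
  have h1 := log_le_log hpow (hlow p hp)
  have h2 := log_le_log (hpow.trans_le (hlow p hp)) (hup p hp)
  rw [log_pow] at h1
  rw [norm_eq_abs, abs_le]
  have hn : (0 : ℝ) ≤ n := n.cast_nonneg
  have h3 := mul_le_mul_of_nonneg_left (neg_abs_le (log (1 - p.2))) hn
  have h4 := mul_nonneg hn (abs_nonneg (log (1 - p.2)))
  have h5 := abs_nonneg (log M)
  have h6 := le_abs_self (log M)
  constructor <;> linarith

lemma integral_comp_cos_add_comp_neg_cos {G : ℝ → ℝ}
    (hG : ∀ a b, IntervalIntegrable (fun x => G (cos x)) volume a b) :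
    ∫ x in (-(π / 2))..(π / 2), (G (cos x) + G (-cos x)) = 2 * ∫ x in 0..π, G (cos x) := by
  have hG' : IntervalIntegrable (fun x => G (-cos x)) volume (-(π / 2)) (π / 2) := by
    have := (hG (-(π / 2) + π) (π / 2 + π)).comp_add_right π
    simpa [cos_add_pi] using this
  have h1 : ∫ x in (-(π / 2))..(π / 2), G (-cos x) = ∫ x in (π / 2)..(3 * π / 2), G (cos x) := by
    have := integral_comp_add_right (a := -(π / 2)) (b := π / 2) (fun x => G (cos x)) π
    simp only [cos_add_pi] at this
    rw [this]
    congr 1 <;> ring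
  have hper : Function.Periodic (fun x => G (cos x)) (2 * π) := fun x => by simp
  have h2 := hper.intervalIntegral_add_eq (-(π / 2)) (-π)
  have h3 : ∫ x in (-π)..0, G (cos x) = ∫ x in 0..π, G (cos x) := by
    have := integral_comp_neg (a := 0) (b := π) (fun x => G (cos x))
    simpa using this.symm
  rw [integral_add (hG _ _) hG', h1, integral_add_adjacent_intervals (hG _ _) (hG _ _),
    show 3 * π / 2 = -(π / 2) + 2 * π by ring, h2, show -π + 2 * π = π by ring,
    ← integral_add_adjacent_intervals (hG (-π) 0) (hG 0 π), h3]
  ring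

lemma setIntegral_log_unitDisk {g : ℝ × ℝ → ℝ} {P Q G : ℝ → ℝ} {n : ℕ}
    (hgint : IntegrableOn (fun p => log (g p)) unitDisk)
    (hg : ∀ a b s, s ^ 2 = 1 - a ^ 2 → g (a, b) = P s - Q s * b)
    (hQ : ∀ s, 0 < Q s) (hsub : ∀ s, P s - Q s * s = (1 - s) ^ n)
    (hadd : ∀ s, P s + Q s * s = (1 + s) ^ n)
    (hG : ∀ a b, IntervalIntegrable (fun x => G (cos x)) volume a b)
    (hPQG : ∀ c, c * ((Q c)⁻¹ * ((1 + c) ^ n * (n * log (1 + c)) - (1 - c) ^ n * (n * log (1 - c))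
      - (1 + c) ^ n + (1 - c) ^ n)) = G c + G (-c)) :
    ∫ p in unitDisk, log (g p) = 2 * ∫ x in 0..π, G (cos x) := by
  rw [setIntegral_unitDisk hgint, ← integral_comp_cos_add_comp_neg_cos hG]
  have hsubst := integral_comp_mul_deriv_of_deriv_nonneg (a := -(π / 2)) (b := π / 2)
    (f := sin) (f' := cos) (g := fun a => ∫ b in (-√(1 - a ^ 2))..√(1 - a ^ 2), log (g (a, b)))
    continuous_sin.continuousOn (fun x _ => hasDerivAt_sin x)
    (fun x hx => cos_nonneg_of_mem_Icc (by
      rw [min_eq_left (by linarith [pi_pos]), max_eq_right (by linarith [pi_pos])] at hx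
      exact ⟨hx.1.le, hx.2.le⟩))
  rw [sin_neg, sin_pi_div_two] at hsubst
  rw [← hsubst]
  refine integral_congr fun x hx => ?_
  rw [Set.uIcc_of_le (by linarith [pi_pos])] at hx
  have hcos : √(1 - sin x ^ 2) = cos x := by
    rw [← cos_sq', sqrt_sq (cos_nonneg_of_mem_Icc hx)]
  simp only [Function.comp_apply, hcos]
  simp_rw [fun b => hg (sin x) b (cos x) (cos_sq' x)]
  rw [integral_comp_sub_mul (fun y => log y) (hQ _).ne', integral_log, hsub, mul_neg,
    sub_neg_eq_add, hadd, log_pow, log_pow, smul_eq_mul, ← hPQG]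
  ring

end UnitDisk

section RadialProjection
open Real
open scoped Pointwise

lemma lintegral_comp_sq_add_sq {F : ℝ → ENNReal} (hF : Measurable F) :
    ∫⁻ w : ℝ × ℝ, F (w.1 ^ 2 + w.2 ^ 2) = ENNReal.ofReal π * ∫⁻ t in Set.Ioi 0, F t := by
  have himage : (fun x : ℝ => x ^ 2) '' Set.Ioi 0 = Set.Ioi 0 := by
    ext y
    refine ⟨?_, fun hy => ⟨√y, sqrt_pos.2 hy, sq_sqrt (le_of_lt hy)⟩⟩
    rintro ⟨x, hx, rfl⟩
    exact pow_pos (Set.mem_Ioi.1 hx) 2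
  have hsubst := lintegral_image_eq_lintegral_abs_deriv_mul (s := Set.Ioi 0)
    (f := fun x : ℝ => x ^ 2) (f' := fun x => 2 * x) measurableSet_Ioi
    (fun x _ => by simpa using (hasDerivAt_pow 2 x).hasDerivWithinAt)
    (fun x hx y hy hxy => (sq_eq_sq₀ (le_of_lt hx) (le_of_lt hy)).1 hxy) F
  rw [himage] at hsubst
  have hpolar : ∀ p : ℝ × ℝ,
      (polarCoord.symm p).1 ^ 2 + (polarCoord.symm p).2 ^ 2 = p.1 ^ 2 := by
    intro p
    simp only [polarCoord_symm_apply]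
    linear_combination p.1 ^ 2 * sin_sq_add_cos_sq p.2
  rw [← lintegral_comp_polarCoord_symm, hsubst]
  simp_rw [hpolar, smul_eq_mul]
  rw [polarCoord_target, Measure.volume_eq_prod, ← Measure.prod_restrict, lintegral_prod _
    (by fun_prop)]
  simp only [lintegral_const, Measure.restrict_apply_univ, Real.volume_Ioo]
  rw [← lintegral_const_mul _ (by fun_prop)]
  refine setLIntegral_congr_fun measurableSet_Ioi fun x (hx : 0 < x) => ?_
  rw [abs_of_pos (by positivity), mul_right_comm, ← ENNReal.ofReal_mul hx.le, ← mul_assoc,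
    ← ENNReal.ofReal_mul pi_pos.le]
  congr 2
  ring

lemma volume_unitDisk : volume unitDisk = ENNReal.ofReal π := by
  have h := lintegral_comp_sq_add_sq (F := (Set.Iio 1).indicator 1)
    (measurable_one.indicator measurableSet_Iio)
  have h1 : ∀ w : ℝ × ℝ, (Set.Iio (1 : ℝ)).indicator (1 : ℝ → ENNReal) (w.1 ^ 2 + w.2 ^ 2) =
      unitDisk.indicator 1 w := fun w => rfl
  simp_rw [h1] at h
  rw [lintegral_indicator_one measurableSet_unitDisk, lintegral_indicator_one measurableSet_Iio,
    Measure.restrict_apply measurableSet_Iio, Set.inter_comm, Set.Ioi_inter_Iio,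
    Real.volume_Ioo] at h
  simpa using h

/-- The part of the unit ball of `ℝ² × ℝ²` whose radial projection to the sphere has its first
component in `A`. -/
def radialSector (A : Set (ℝ × ℝ)) : Set ((ℝ × ℝ) × (ℝ × ℝ)) :=
  {z | z.1.1 ^ 2 + z.1.2 ^ 2 + (z.2.1 ^ 2 + z.2.2 ^ 2) < 1 ∧
    (√(z.1.1 ^ 2 + z.1.2 ^ 2 + (z.2.1 ^ 2 + z.2.2 ^ 2)))⁻¹ • z.1 ∈ A}

lemma measurableSet_radialSector {A : Set (ℝ × ℝ)} (hA : MeasurableSet A) :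
    MeasurableSet (radialSector A) := by
  refine MeasurableSet.inter ?_ (measurableSet_preimage ?_ hA)
  · exact measurableSet_lt
      (f := fun z : (ℝ × ℝ) × (ℝ × ℝ) => z.1.1 ^ 2 + z.1.2 ^ 2 + (z.2.1 ^ 2 + z.2.2 ^ 2))
      (by fun_prop) measurable_const
  · fun_prop

lemma volume_radialSector : ∃ C : ENNReal, ∀ A : Set (ℝ × ℝ), MeasurableSet A →
    volume (radialSector A) = C * volume (A ∩ unitDisk) := by
  refine ⟨ENNReal.ofReal π * ∫⁻ r, (Set.Ioo 0 1).indicator ENNReal.ofReal r, fun A hA => ?_⟩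
  set B : Set ((ℝ × ℝ) × ℝ) :=
    {z | z.1.1 ^ 2 + z.1.2 ^ 2 < z.2 ∧ z.2 < 1 ∧ (√z.2)⁻¹ • z.1 ∈ A} with hB
  have hBm : MeasurableSet B :=
    (measurableSet_lt (f := fun z : (ℝ × ℝ) × ℝ => z.1.1 ^ 2 + z.1.2 ^ 2) (by fun_prop)
      measurable_snd).inter
      ((measurableSet_lt measurable_snd measurable_const).inter (measurableSet_preimage
        (f := fun z : (ℝ × ℝ) × ℝ => (√z.2)⁻¹ • z.1) (by fun_prop) hA))
  have hind : Measurable (B.indicator (1 : (ℝ × ℝ) × ℝ → ENNReal)) := measurable_one.indicator hBm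
  have hfiber : ∀ v : ℝ × ℝ, ∫⁻ w, (radialSector A).indicator (1 : (ℝ × ℝ) × (ℝ × ℝ) → ENNReal) (v, w) =
      ENNReal.ofReal π * ∫⁻ r, B.indicator (1 : (ℝ × ℝ) × ℝ → ENNReal) (v, r) := by
    intro v
    set m : ℝ := v.1 ^ 2 + v.2 ^ 2 with hm
    set T : Set ℝ := {t | m + t < 1 ∧ (√(m + t))⁻¹ • v ∈ A} with hT
    have hTm : MeasurableSet T :=
      (measurableSet_lt (f := fun t => m + t) (by fun_prop) measurable_const).inter
        (measurableSet_preimage (f := fun t : ℝ => (√(m + t))⁻¹ • v) (by fun_prop) hA)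
    have h1 : ∀ w : ℝ × ℝ, (radialSector A).indicator (1 : (ℝ × ℝ) × (ℝ × ℝ) → ENNReal) (v, w) =
        T.indicator 1 (w.1 ^ 2 + w.2 ^ 2) := fun w => rfl
    simp_rw [h1]
    rw [lintegral_comp_sq_add_sq (measurable_one.indicator hTm),
      ← lintegral_indicator measurableSet_Ioi,
      ← lintegral_add_left_eq_self (fun r => B.indicator (1 : (ℝ × ℝ) × ℝ → ENNReal) (v, r)) m]
    congr 1
    refine lintegral_congr fun t => ?_
    have h2 : (v, m + t) ∈ B ↔ t ∈ Set.Ioi 0 ∩ T := by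
      simp only [hB, hT, Set.mem_ofPred_eq, Set.mem_inter_iff, Set.mem_Ioi, ← hm]
      simp
    rw [Set.indicator_indicator]
    by_cases h : t ∈ Set.Ioi 0 ∩ T
    · rw [Set.indicator_of_mem h, Set.indicator_of_mem (h2.2 h)]; rfl
    · rw [Set.indicator_of_notMem h, Set.indicator_of_notMem (mt h2.1 h)]
  have hslice : ∀ r : ℝ, ∫⁻ v, B.indicator (1 : (ℝ × ℝ) × ℝ → ENNReal) (v, r) =
      (Set.Ioo 0 1).indicator ENNReal.ofReal r * volume (A ∩ unitDisk) := by
    intro r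
    have h1 : ∀ v : ℝ × ℝ, B.indicator (1 : (ℝ × ℝ) × ℝ → ENNReal) (v, r) =
        {v | (v, r) ∈ B}.indicator 1 v := fun v => rfl
    simp_rw [h1]
    rw [lintegral_indicator_one (s := {v | (v, r) ∈ B}) (hBm.preimage measurable_prodMk_right)]
    by_cases hr : r ∈ Set.Ioo (0 : ℝ) 1
    · have hs : 0 < √r := sqrt_pos.2 hr.1
      have hset : {v | (v, r) ∈ B} = √r • (A ∩ unitDisk) := by
        ext v
        rw [Set.mem_smul_set_iff_inv_smul_mem₀ hs.ne', Set.mem_inter_iff, mem_unitDisk]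
        simp only [hB, Set.mem_ofPred_eq, hr.2, true_and, Prod.smul_fst, Prod.smul_snd, smul_eq_mul,
          mul_pow, inv_pow, sq_sqrt hr.1.le, ← mul_add]
        rw [inv_mul_lt_one₀ hr.1, and_comm]
      rw [hset, Measure.addHaar_smul, Set.indicator_of_mem hr]
      simp [sq_sqrt hr.1.le, abs_of_pos hr.1]
    · have hset : {v | (v, r) ∈ B} = ∅ := by
        rw [Set.eq_empty_iff_forall_notMem]
        rintro v ⟨h1, h2, -⟩
        exact hr ⟨lt_of_le_of_lt (by positivity) h1, h2⟩
      rw [hset, Set.indicator_of_notMem hr]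
      simp
  rw [← lintegral_indicator_one (measurableSet_radialSector hA), Measure.volume_eq_prod,
    lintegral_prod _ (measurable_one.indicator (measurableSet_radialSector hA)).aemeasurable]
  simp_rw [hfiber]
  rw [lintegral_const_mul _ hind.lintegral_prod_right', lintegral_lintegral_swap
    (f := fun v r => B.indicator 1 (v, r)) hind.aemeasurable]
  simp_rw [hslice]
  rw [lintegral_mul_const _ (ENNReal.measurable_ofReal.indicator measurableSet_Ioo), mul_assoc]

end RadialProjection

section HaarMeasure

/-- Radial projection of the quaternions to the unit sphere, sending `0` to `1`. -/
noncomputable def normalizeH (q : ℍ[ℝ]) : Metric.sphere (0 : ℍ[ℝ]) 1 :=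
  open Classical in if h : q = 0 then 1 else
    ⟨‖q‖⁻¹ • q, by rw [mem_sphere_zero_iff_norm]; exact norm_smul_inv_norm (𝕜 := ℝ) h⟩

lemma coe_normalizeH {q : ℍ[ℝ]} (hq : q ≠ 0) : (normalizeH q : ℍ[ℝ]) = ‖q‖⁻¹ • q := by
  simp [normalizeH, hq]

lemma measurable_normalizeH : Measurable normalizeH := by
  classical
  have h : (fun q => (normalizeH q : ℍ[ℝ])) = fun q => if q = 0 then 1 else ‖q‖⁻¹ • q := by
    funext q
    by_cases hq : q = 0
    · simp [normalizeH, hq]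
    · simp [coe_normalizeH hq, hq]
  have hm : Measurable fun q => (normalizeH q : ℍ[ℝ]) := by
    rw [h]
    exact Measurable.ite (measurableSet_singleton 0) measurable_const (by fun_prop)
  exact hm.subtype_mk

lemma normalizeH_mul (x : Metric.sphere (0 : ℍ[ℝ]) 1) {q : ℍ[ℝ]} (hq : q ≠ 0) :
    normalizeH (x * q) = x * normalizeH q := by
  have hx : ‖(x : ℍ[ℝ])‖ = 1 := mem_sphere_zero_iff_norm.1 x.2
  have hx0 : (x : ℍ[ℝ]) ≠ 0 := by
    intro h; simp [h] at hx
  ext1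
  rw [coe_normalizeH (mul_ne_zero hx0 hq)]
  simp [coe_normalizeH hq, hx]

lemma measurePreserving_mul_left (x : Metric.sphere (0 : ℍ[ℝ]) 1) :
    MeasurePreserving (fun q : ℍ[ℝ] => x * q) volume volume := by
  have hx : ‖(x : ℍ[ℝ])‖ = 1 := mem_sphere_zero_iff_norm.1 x.2
  let f : ℍ[ℝ] →ₗᵢ[ℝ] ℍ[ℝ] := ⟨LinearMap.mulLeft ℝ (x : ℍ[ℝ]), fun q => by simp [hx]⟩
  exact (f.toLinearIsometryEquiv rfl).measurePreserving

/-- The radial projection of Lebesgue measure on the unit ball is a multiple of `muH`. -/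
lemma map_normalizeH_volume_ball :
    Measure.map normalizeH (volume.restrict (Metric.ball 0 1)) =
      volume (Metric.ball (0 : ℍ[ℝ]) 1) • muH := by
  set ρ : Measure ℍ[ℝ] := volume.restrict (Metric.ball 0 1)
  have : IsFiniteMeasure ρ := isFiniteMeasure_restrict.2 measure_ball_lt_top.ne
  have hinv : (Measure.map normalizeH ρ).IsMulLeftInvariant := by
    refine ⟨fun x => ?_⟩
    have hx : ‖(x : ℍ[ℝ])‖ = 1 := mem_sphere_zero_iff_norm.1 x.2
    have hball : (fun q : ℍ[ℝ] => x * q) ⁻¹' Metric.ball 0 1 = Metric.ball 0 1 := by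
      ext q
      simp [hx]
    have hρ : MeasurePreserving (fun q : ℍ[ℝ] => x * q) ρ ρ := by
      have := (measurePreserving_mul_left x).restrict_preimage
        (Metric.isOpen_ball (x := (0 : ℍ[ℝ])) (ε := 1)).measurableSet
      rwa [hball] at this
    have hae : (fun q => x * normalizeH q) =ᵐ[ρ] fun q => normalizeH (x * q) := by
      have : ∀ᵐ q ∂ρ, q ≠ 0 := ae_restrict_of_ae (Measure.ae_ne volume 0)
      filter_upwards [this] with q hq
      rw [normalizeH_mul x hq]
    rw [Measure.map_map (measurable_const_mul x) measurable_normalizeH]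
    refine (Measure.map_congr hae).trans ?_
    conv_rhs => rw [← hρ.map_eq, Measure.map_map measurable_normalizeH hρ.measurable]
    rfl
  have h := Measure.haarMeasure_unique (Measure.map normalizeH ρ) ⊤
  rw [h, Measure.map_apply measurable_normalizeH]
  · simp [ρ, muH]
  · simp

/-- The coordinates of a quaternion, grouped as `((re, imI), (imJ, imK))`. -/
noncomputable def coordsH : ℍ[ℝ] ≃L[ℝ] (ℝ × ℝ) × (ℝ × ℝ) :=
  LinearEquiv.toContinuousLinearEquiv
    { toFun := fun q => ((q.re, q.imI), (q.imJ, q.imK))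
      invFun := fun z => ⟨z.1.1, z.1.2, z.2.1, z.2.2⟩
      map_add' := fun _ _ => rfl
      map_smul' := fun _ _ => rfl
      left_inv := fun _ => rfl
      right_inv := fun _ => rfl }

lemma norm_eq_sqrt_coords (q : ℍ[ℝ]) :
    ‖q‖ = √(q.re ^ 2 + q.imI ^ 2 + (q.imJ ^ 2 + q.imK ^ 2)) := by
  rw [← Real.sqrt_sq (norm_nonneg q), sq, ← Quaternion.normSq_eq_norm_mul_self,
    Quaternion.normSq_def', add_assoc (q.re ^ 2 + q.imI ^ 2)]

/-- The first two coordinates of a Haar-random unit quaternion are uniform on the unit disk. -/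
lemma map_re_imI_muH :
    Measure.map (fun q : Metric.sphere (0 : ℍ[ℝ]) 1 => ((q : ℍ[ℝ]).re, (q : ℍ[ℝ]).imI)) muH =
      (ENNReal.ofReal Real.pi)⁻¹ • volume.restrict unitDisk := by
  set pr : Metric.sphere (0 : ℍ[ℝ]) 1 → ℝ × ℝ := fun q => ((q : ℍ[ℝ]).re, (q : ℍ[ℝ]).imI) with hpr
  have hprm : Measurable pr :=
    ((Quaternion.continuous_re.comp continuous_subtype_val).prodMk
      (Quaternion.continuous_imI.comp continuous_subtype_val)).measurable
  obtain ⟨C, hC⟩ := volume_radialSector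
  have hcoords : Measurable coordsH := coordsH.continuous.measurable
  have hhaar : (Measure.map coordsH (volume : Measure ℍ[ℝ])).IsAddHaarMeasure :=
    coordsH.isAddHaarMeasure_map volume
  have : (volume : Measure ((ℝ × ℝ) × (ℝ × ℝ))).IsAddHaarMeasure :=
    Measure.prod.instIsAddHaarMeasure _ _
  have hκ := Measure.isAddLeftInvariant_eq_smul (Measure.map coordsH (volume : Measure ℍ[ℝ])) volume
  set κ := (Measure.map coordsH (volume : Measure ℍ[ℝ])).addHaarScalarFactor volume
  have hball0 : volume (Metric.ball (0 : ℍ[ℝ]) 1) ≠ 0 := (Metric.measure_ball_pos _ _ one_pos).ne'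
  have hballtop : volume (Metric.ball (0 : ℍ[ℝ]) 1) ≠ ⊤ := measure_ball_lt_top.ne
  set V := volume (Metric.ball (0 : ℍ[ℝ]) 1) with hV
  have hmap : ∀ A, MeasurableSet A → V * Measure.map pr muH A = κ * (C * volume (A ∩ unitDisk)) := by
    intro A hA
    have hpre : (normalizeH ⁻¹' (pr ⁻¹' A) ∩ Metric.ball 0 1 : Set ℍ[ℝ]) =ᵐ[volume]
        (coordsH ⁻¹' radialSector A : Set ℍ[ℝ]) := by
      filter_upwards [Measure.ae_ne volume (0 : ℍ[ℝ])] with q hq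
      refine propext ?_
      change (normalizeH q ∈ pr ⁻¹' A ∧ q ∈ Metric.ball 0 1) ↔ coordsH q ∈ radialSector A
      have hn := norm_eq_sqrt_coords q
      have h1 : q ∈ Metric.ball (0 : ℍ[ℝ]) 1 ↔
          q.re ^ 2 + q.imI ^ 2 + (q.imJ ^ 2 + q.imK ^ 2) < 1 := by
        rw [mem_ball_zero_iff, hn, Real.sqrt_lt' one_pos, one_pow]
      have h2 : normalizeH q ∈ pr ⁻¹' A ↔ ‖q‖⁻¹ • (q.re, q.imI) ∈ A := by
        simp [hpr, coe_normalizeH hq]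
      rw [h1, h2, hn, and_comm]
      rfl
    calc V * Measure.map pr muH A = (V • muH) (pr ⁻¹' A) := by
          rw [Measure.map_apply hprm hA, Measure.smul_apply, smul_eq_mul]
      _ = volume (coordsH ⁻¹' radialSector A) := by
          rw [hV, ← map_normalizeH_volume_ball, Measure.map_apply measurable_normalizeH (hprm hA),
            Measure.restrict_apply (measurable_normalizeH (hprm hA)), measure_congr hpre]
      _ = κ * (C * volume (A ∩ unitDisk)) := by
          rw [← Measure.map_apply hcoords (measurableSet_radialSector hA), hκ, ← hC A hA]
          rfl
  have hprob : IsProbabilityMeasure muH := ⟨Measure.haarMeasure_self⟩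
  have huniv := hmap Set.univ MeasurableSet.univ
  rw [Measure.map_apply hprm MeasurableSet.univ, Set.preimage_univ, measure_univ, mul_one,
    Set.univ_inter, volume_unitDisk] at huniv
  have hpi0 : ENNReal.ofReal Real.pi ≠ 0 := by simp [Real.pi_pos]
  ext A hA
  rw [Measure.smul_apply, Measure.restrict_apply hA, smul_eq_mul]
  have h := hmap A hA
  rw [← ENNReal.mul_right_inj hball0 hballtop, h, huniv, ← mul_assoc, ← mul_assoc, ← mul_assoc,
    mul_assoc (_ * _) (ENNReal.ofReal _), ENNReal.mul_inv_cancel hpi0 ENNReal.ofReal_ne_top, mul_one]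

end HaarMeasure

section MahlerMeasure
open Real

/-- If `‖f q‖ ^ 2` depends only on the first two coordinates of `q` on the unit sphere, then its
Mahler measure is an integral over the unit disk. -/
lemma mahlerH_eq_setIntegral {f : ℍ[ℝ] → ℍ[ℝ]} {g : ℝ × ℝ → ℝ} {n : ℕ} {K : ℝ} (hK : 0 < K)
    (hg : Measurable g) (hlow : ∀ p ∈ unitDisk, (1 - p.2) ^ n ≤ g p)
    (hgint : IntegrableOn (fun p => log (g p)) unitDisk)
    (hf : ∀ q : ℍ[ℝ], ‖q‖ = 1 → ‖f q‖ ^ 2 = K * g (q.re, q.imI)) :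
    mahlerH f = log K / 2 + (2 * π)⁻¹ * ∫ p in unitDisk, log (g p) := by
  have hlog : ∀ q : Metric.sphere (0 : ℍ[ℝ]) 1,
      log ‖f q‖ = 2⁻¹ * log (K * g ((q : ℍ[ℝ]).re, (q : ℍ[ℝ]).imI)) := by
    intro q
    rw [← hf q (mem_sphere_zero_iff_norm.1 q.2), log_pow]
    push_cast
    ring
  have hpr : Measurable fun q : Metric.sphere (0 : ℍ[ℝ]) 1 => ((q : ℍ[ℝ]).re, (q : ℍ[ℝ]).imI) :=
    ((Quaternion.continuous_re.comp continuous_subtype_val).prodMk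
      (Quaternion.continuous_imI.comp continuous_subtype_val)).measurable
  have hsplit : ∫ p in unitDisk, log (K * g p) = π * log K + ∫ p in unitDisk, log (g p) := by
    have hconst : IntegrableOn (fun _ : ℝ × ℝ => log K) unitDisk :=
      integrableOn_const (by rw [volume_unitDisk]; exact ENNReal.ofReal_ne_top)
    have hae : ∀ p ∈ unitDisk, log (K * g p) = log K + log (g p) := by
      intro p hp
      have h1 : 0 < 1 - p.2 := by
        have := mem_unitDisk.1 hp
        nlinarith [sq_nonneg p.1]
      rw [log_mul hK.ne' (lt_of_lt_of_le (pow_pos h1 n) (hlow p hp)).ne']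
    rw [setIntegral_congr_fun measurableSet_unitDisk hae, integral_add hconst hgint,
      setIntegral_const, Measure.real, volume_unitDisk, ENNReal.toReal_ofReal pi_pos.le,
      smul_eq_mul]
  have hmap := integral_map (μ := muH) hpr.aemeasurable
    (f := fun p => 2⁻¹ * log (K * g p)) (by
      exact ((hg.const_mul K).log.const_mul 2⁻¹).aestronglyMeasurable)
  rw [map_re_imI_muH, integral_smul_measure, integral_const_mul, hsplit, ENNReal.toReal_inv,
    ENNReal.toReal_ofReal pi_pos.le, smul_eq_mul] at hmap
  simp_rw [mahlerH, hlog]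
  rw [← hmap]
  have := pi_pos.ne'
  field_simp

lemma re_qI : qI.re = 0 := rfl
lemma imI_qI : qI.imI = 1 := rfl
lemma imJ_qI : qI.imJ = 0 := rfl
lemma imK_qI : qI.imK = 0 := rfl

lemma sq_coords_add_eq_one {q : ℍ[ℝ]} (hq : ‖q‖ = 1) :
    q.re ^ 2 + q.imI ^ 2 + q.imJ ^ 2 + q.imK ^ 2 = 1 := by
  rw [← Quaternion.normSq_def', Quaternion.normSq_eq_norm_mul_self, hq, one_mul]

lemma norm_sq_star_square {q : ℍ[ℝ]} (hq : ‖q‖ = 1) :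
    ‖q ^ 2 - 2 * q * qI - 1‖ ^ 2 = 4 * (2 - q.re ^ 2 - 2 * q.imI) := by
  have h := sq_coords_add_eq_one hq
  rw [sq ‖_‖, ← Quaternion.normSq_eq_norm_mul_self, Quaternion.normSq_def']
  have h2 : (2 : ℍ[ℝ]) * q = q + q := two_mul q
  simp [re_qI, imI_qI, imJ_qI, imK_qI, h2, sq]
  grind

lemma norm_sq_star_cube {q : ℍ[ℝ]} (hq : ‖q‖ = 1) :
    ‖q ^ 3 - 3 * q ^ 2 * qI - 3 * q + qI‖ ^ 2 =
      8 * (4 - 3 * q.re ^ 2 - 4 * q.imI + q.re ^ 2 * q.imI) := by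
  have h := sq_coords_add_eq_one hq
  have h3 : ∀ p : ℍ[ℝ], 3 * p = p + p + p := fun p => by noncomm_ring
  rw [sq ‖_‖, ← Quaternion.normSq_eq_norm_mul_self, Quaternion.normSq_def']
  simp [re_qI, imI_qI, imJ_qI, imK_qI, h3, pow_succ]
  grind

lemma intervalIntegrable_mul_log_one_add_cos {F : ℝ → ℝ} (hF : Continuous F) (a b : ℝ) :
    IntervalIntegrable (fun x => F x * log (1 + cos x)) volume a b :=
  (intervalIntegrable_log_one_add_cos a b).continuousOn_mul hF.continuousOn

lemma integral_star_square :
    ∫ x in 0..π, ((cos x ^ 3 + 2 * cos x ^ 2 + cos x) * log (1 + cos x) - cos x ^ 2) =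
      5 / 6 * π - π * log 2 := by
  have h (F : ℝ → ℝ) (hF : Continuous F) := intervalIntegrable_mul_log_one_add_cos hF 0 π
  have h3 := h (fun x => cos x ^ 3) (by fun_prop)
  have h2 := h (fun x => cos x ^ 2) (by fun_prop)
  have h1 := h (fun x => cos x) (by fun_prop)
  have hsq : IntervalIntegrable (fun x => cos x ^ 2) volume 0 π :=
    (by fun_prop : Continuous fun x => cos x ^ 2).intervalIntegrable _ _
  calc _ = ∫ x in 0..π, (cos x ^ 3 * log (1 + cos x) + 2 * (cos x ^ 2 * log (1 + cos x)) +
        cos x * log (1 + cos x) - cos x ^ 2) := by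
        congr 1; funext x; ring
    _ = _ := by
        rw [intervalIntegral.integral_sub ((h3.add (h2.const_mul 2)).add h1) hsq,
          intervalIntegral.integral_add (h3.add (h2.const_mul 2)) h1,
          intervalIntegral.integral_add h3 (h2.const_mul 2), intervalIntegral.integral_const_mul,
          integral_cos_cube_mul_log_one_add_cos, integral_cos_sq_mul_log_one_add_cos,
          integral_cos_mul_log_one_add_cos, integral_cos_sq]
        simp
        ring

lemma integral_star_cube :
    ∫ x in 0..π, (3 * (cos x ^ 2 + 3 * cos x - 8 * (cos x / (cos x ^ 2 + 3))) * log (1 + cos x) -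
      cos x ^ 2) = 31 / 4 * π - 2 * π ^ 2 - 3 / 2 * π * log 2 := by
  have h (F : ℝ → ℝ) (hF : Continuous F) := intervalIntegrable_mul_log_one_add_cos hF 0 π
  have h3 := (h (fun x => cos x / (cos x ^ 2 + 3))
    (continuous_cos.div (by fun_prop) fun x => by positivity)).const_mul 24
  have h2 := (h (fun x => cos x ^ 2) (by fun_prop)).const_mul 3
  have h1 := (h (fun x => cos x) (by fun_prop)).const_mul 9
  have hsq : IntervalIntegrable (fun x => cos x ^ 2) volume 0 π :=
    (by fun_prop : Continuous fun x => cos x ^ 2).intervalIntegrable _ _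
  calc _ = ∫ x in 0..π, (3 * (cos x ^ 2 * log (1 + cos x)) + 9 * (cos x * log (1 + cos x)) -
        24 * (cos x / (cos x ^ 2 + 3) * log (1 + cos x)) - cos x ^ 2) := by
        congr 1; funext x; ring
    _ = _ := by
        rw [intervalIntegral.integral_sub ((h2.add h1).sub h3) hsq,
          intervalIntegral.integral_sub (h2.add h1) h3, intervalIntegral.integral_add h2 h1,
          intervalIntegral.integral_const_mul, intervalIntegral.integral_const_mul,
          intervalIntegral.integral_const_mul, integral_cos_div_mul_log_one_add_cos,
          integral_cos_sq_mul_log_one_add_cos, integral_cos_mul_log_one_add_cos, integral_cos_sq]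
        simp
        ring

lemma mahlerH_star_square : mahlerH (fun q => q ^ 2 - 2 * q * qI - 1) = 5 / 6 := by
  set g : ℝ × ℝ → ℝ := fun p => 2 - p.1 ^ 2 - 2 * p.2 with hg
  have hgm : Measurable g := by fun_prop
  have hlow : ∀ p ∈ unitDisk, (1 - p.2) ^ 2 ≤ g p := by
    intro p hp
    have := mem_unitDisk.1 hp
    simp only [hg]
    linarith
  have hgint : IntegrableOn (fun p => log (g p)) unitDisk := by
    refine integrableOn_log_unitDisk (M := 4) hgm hlow fun p hp => ?_
    have := mem_unitDisk.1 hp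
    simp only [hg]
    nlinarith [sq_nonneg p.1]
  have hdisk := setIntegral_log_unitDisk (n := 2) (P := fun s => 1 + s ^ 2) (Q := fun _ => 2)
    (G := fun c => (c ^ 3 + 2 * c ^ 2 + c) * log (1 + c) - c ^ 2) hgint
    (fun a b s hs => by simp only [hg, hs]; ring) (fun _ => two_pos) (fun s => by ring)
    (fun s => by ring)
    (fun a b => (intervalIntegrable_mul_log_one_add_cos (by fun_prop) a b).sub
      ((by fun_prop : Continuous fun x => cos x ^ 2).intervalIntegrable a b))
    (fun c => by rw [← sub_eq_add_neg 1 c]; push_cast; ring)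
  rw [integral_star_square] at hdisk
  rw [mahlerH_eq_setIntegral (K := 4) (by norm_num) hgm hlow hgint
    fun q hq => norm_sq_star_square hq, hdisk, show (4 : ℝ) = 2 ^ 2 by norm_num, log_pow]
  have := pi_pos.ne'
  field_simp
  push_cast
  ring

lemma mahlerH_star_cube :
    mahlerH (fun q => q ^ 3 - 3 * q ^ 2 * qI - 3 * q + qI) = 31 / 4 - 2 * π := by
  set g : ℝ × ℝ → ℝ := fun p => 4 - 3 * p.1 ^ 2 - 4 * p.2 + p.1 ^ 2 * p.2 with hg
  have hgm : Measurable g := by fun_prop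
  have hlow : ∀ p ∈ unitDisk, (1 - p.2) ^ 3 ≤ g p := by
    intro p hp
    have h := mem_unitDisk.1 hp
    have h3 : 0 < 3 - p.2 := by nlinarith [sq_nonneg p.1]
    simp only [hg]
    nlinarith [mul_pos h3 (sub_pos.2 h)]
  have hgint : IntegrableOn (fun p => log (g p)) unitDisk := by
    refine integrableOn_log_unitDisk (M := 8) hgm hlow fun p hp => ?_
    have h := mem_unitDisk.1 hp
    have h3 : 0 < 3 - p.2 := by nlinarith [sq_nonneg p.1]
    have h1 : -1 ≤ p.2 := by nlinarith [sq_nonneg p.1]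
    simp only [hg]
    nlinarith [mul_nonneg h3.le (sq_nonneg p.1)]
  have hdisk := setIntegral_log_unitDisk (n := 3) (P := fun s => 1 + 3 * s ^ 2)
    (Q := fun s => 3 + s ^ 2)
    (G := fun c => 3 * (c ^ 2 + 3 * c - 8 * (c / (c ^ 2 + 3))) * log (1 + c) - c ^ 2) hgint
    (fun a b s hs => by simp only [hg, hs]; ring) (fun _ => by positivity) (fun s => by ring)
    (fun s => by ring)
    (fun a b => (intervalIntegrable_mul_log_one_add_cos
      (F := fun x => 3 * (cos x ^ 2 + 3 * cos x - 8 * (cos x / (cos x ^ 2 + 3))))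
      (by
        have : Continuous fun x => cos x / (cos x ^ 2 + 3) :=
          continuous_cos.div (by fun_prop) fun x => by positivity
        fun_prop) a b).sub
      ((by fun_prop : Continuous fun x => cos x ^ 2).intervalIntegrable a b))
    (fun c => by
      have hc : c ^ 2 + 3 ≠ 0 := by positivity
      rw [← sub_eq_add_neg 1 c, neg_sq, add_comm 3 (c ^ 2)]
      push_cast
      field_simp
      ring)
  rw [integral_star_cube] at hdisk
  rw [mahlerH_eq_setIntegral (K := 8) (by norm_num) hgm hlow hgint
    fun q hq => norm_sq_star_cube hq, hdisk, show (8 : ℝ) = 2 ^ 3 by norm_num, log_pow]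
  have := pi_pos.ne'
  field_simp
  push_cast
  ring

end MahlerMeasure

/-- the Mahler measures of the ∗-square and ∗-cube of `x - i`. -/
theorem mahlerH_star_square_cube_sub_i :
    mahlerH (fun q => q ^ 2 - 2 * q * qI - 1) = 5 / 6 ∧
    mahlerH (fun q => q ^ 3 - 3 * q ^ 2 * qI - 3 * q + qI) = 31 / 4 - 2 * Real.pi :=
  ⟨mahlerH_star_square, mahlerH_star_cube⟩
end
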